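/- For each odd prime p, set a_p = p − #{(x,y) ∈ F_p × F_p : y² = x³ + x}, and let π(N) denote the number of primes at most N. Then lim_{N → ∞} (1/π(N)) · Σ_{odd primes p ≤ N} a_p² / p = 1. -/

import Mathlib

section
open Filter Topology MeasureTheory Set
namespace CM

/-- Fejer kernel -/
noncomputable def fejer (v : ℝ) : ℝ := if v = 0 then 1 else 2 * (1 - Real.cos v) / v ^ 2

lemma fejer_nonneg (v : ℝ) : 0 ≤ fejer v := by
  unfold fejer; split_ifs
  · norm_num
  · have := Real.cos_le_one v
    have : 0 ≤ 1 - Real.cos v := by linarith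
    positivity

lemma fejer_le_one (v : ℝ) : fejer v ≤ 1 := by
  unfold fejer; split_ifs with h
  · norm_num
  · have := Real.one_sub_sq_div_two_le_cos (x := v)
    rw [div_le_one (by positivity)]
    linarith

lemma fejer_le {v : ℝ} (h : v ≠ 0) : fejer v ≤ 4 / v ^ 2 := by
  unfold fejer; rw [if_neg h]
  have := Real.neg_one_le_cos v
  gcongr; linarith

lemma fejer_le' (v : ℝ) : fejer v ≤ 5 * (1 + v ^ 2)⁻¹ := by
  rw [← div_eq_mul_inv, le_div_iff₀ (by positivity)]
  have h1 := fejer_le_one v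
  by_cases h : v = 0
  · subst h; linarith
  · have h2 := fejer_le h
    rw [le_div_iff₀ (by positivity)] at h2
    linarith

lemma fejer_ge {v : ℝ} (hv : |v| ≤ 1) : 1 / 2 ≤ fejer v := by
  unfold fejer; split_ifs with h
  · norm_num
  · have h1 := Real.cos_bound hv
    have h2 : |v| ^ 4 = v ^ 4 := by rw [pow_abs, abs_of_nonneg (by positivity)]
    rw [h2, abs_le] at h1
    have h3 : v ^ 2 ≤ 1 := by rw [← sq_abs]; nlinarith [abs_nonneg v]
    rw [le_div_iff₀ (by positivity)]
    nlinarith [sq_nonneg v]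

lemma fejer_meas : Measurable fejer := by
  unfold fejer
  exact Measurable.ite (by measurability) (by fun_prop) (by fun_prop)

lemma fejer_integrable {l : ℝ} (hl : 0 < l) (y : ℝ) :
    Integrable (fun u => fejer (l * (u - y))) := by
  have h0 : Integrable fejer := by
    refine (integrable_inv_one_add_sq.const_mul 5).mono' fejer_meas.aestronglyMeasurable ?_
    refine Eventually.of_forall fun v => ?_
    rw [Real.norm_of_nonneg (fejer_nonneg v)]
    exact fejer_le' v
  exact (h0.comp_mul_left' hl.ne').comp_sub_right y

lemma inv_integrable (M y : ℝ) : Integrable (fun u : ℝ => M * (1 + (u - y) ^ 2)⁻¹) :=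
  (integrable_inv_one_add_sq.comp_sub_right y).const_mul M

lemma core (F : ℝ → ℝ) (hF : Measurable F) (B : ℝ) (hB : ∀ u, 0 < u → |F u| ≤ B)
    (hJ : ∀ l, 0 < l → Tendsto (fun y => ∫ u in Ioi (0:ℝ), F u * fejer (l * (u - y))) atTop (𝓝 0))
    (ε : ℝ) (hε : 0 < ε) (η : ℝ) (hη : 0 < η) :
    ∀ᶠ y in atTop, ¬ (∀ u ∈ Icc (y - η) (y + η), ε ≤ F u) := by
  have hB0 : 0 ≤ B := (abs_nonneg _).trans (hB 1 one_pos)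
  set Q : ℝ := B * (4 * (1 + (η⁻¹) ^ 2)) * Real.pi with hQ
  have hQ0 : 0 ≤ Q := by positivity
  -- choose l
  set l : ℝ := max (η⁻¹) (2 * Q / ε + 1) with hl
  have hl0 : 0 < l := lt_of_lt_of_le (inv_pos.2 hη) (le_max_left _ _)
  have hl1 : l⁻¹ ≤ η := by
    rw [inv_le_comm₀ hl0 hη]; exact le_max_left _ _
  have hl2 : 2 * Q < ε * l := by
    have : 2 * Q / ε + 1 ≤ l := le_max_right _ _
    have h3 : 2 * Q / ε < l := by linarith
    rw [div_lt_iff₀ hε] at h3; linarith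
  have hev := (hJ l hl0).eventually (gt_mem_nhds (show (0:ℝ) < ε / l / 2 by positivity))
  filter_upwards [hev, eventually_gt_atTop l⁻¹] with y hy hyl hall
  set M : ℝ := B * (4 * (1 + (η⁻¹) ^ 2)) / l ^ 2 with hM
  have hM0 : 0 ≤ M := by positivity
  have hli : 0 < l⁻¹ := inv_pos.2 hl0
  -- pointwise bound
  have hpt : ∀ u ∈ Ioi (0:ℝ), (Icc (y - l⁻¹) (y + l⁻¹)).indicator (fun _ => ε / 2) u
      - M * (1 + (u - y) ^ 2)⁻¹ ≤ F u * fejer (l * (u - y)) := by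
    intro u hu
    have hMi : 0 ≤ M * (1 + (u - y) ^ 2)⁻¹ := by positivity
    by_cases h1 : u ∈ Icc (y - l⁻¹) (y + l⁻¹)
    · rw [indicator_of_mem h1]
      have h2 : ε ≤ F u := hall u ⟨by linarith [h1.1], by linarith [h1.2]⟩
      have h3 : |l * (u - y)| ≤ 1 := by
        rw [abs_mul, abs_of_pos hl0]
        have : |u - y| ≤ l⁻¹ := abs_le.2 ⟨by linarith [h1.1], by linarith [h1.2]⟩
        calc l * |u - y| ≤ l * l⁻¹ := by gcongr
          _ = 1 := mul_inv_cancel₀ hl0.ne'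
      have h4 := fejer_ge h3
      nlinarith
    · rw [indicator_of_notMem h1]
      by_cases h2 : u ∈ Icc (y - η) (y + η)
      · have h3 := hall u h2
        have h4 := fejer_nonneg (l * (u - y))
        have : 0 ≤ F u * fejer (l * (u - y)) := mul_nonneg (hε.le.trans h3) h4
        linarith
      · have h3 : η ≤ |u - y| := by
          by_contra hc
          push Not at hc
          rw [abs_lt] at hc
          exact h2 ⟨by linarith, by linarith⟩
        have h4 : u - y ≠ 0 := by
          intro h; rw [h, abs_zero] at h3; linarith
        have h5 := fejer_le (mul_ne_zero hl0.ne' h4)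
        have h6 := fejer_nonneg (l * (u - y))
        have h7 := abs_le.1 (hB u hu)
        have h8 : -(B * fejer (l * (u - y))) ≤ F u * fejer (l * (u - y)) := by nlinarith
        have h9 : fejer (l * (u - y)) ≤ 4 * (1 + (η⁻¹) ^ 2) / l ^ 2 * (1 + (u - y) ^ 2)⁻¹ := by
          refine h5.trans ?_
          have hx : η ^ 2 ≤ (u - y) ^ 2 := by rw [← sq_abs (u - y)]; gcongr
          have hx1 : 1 ≤ (η⁻¹) ^ 2 * (u - y) ^ 2 := by
            calc (1:ℝ) = (η⁻¹) ^ 2 * η ^ 2 := by field_simp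
              _ ≤ _ := by gcongr
          have hx2 : 0 < (u - y) ^ 2 := by positivity
          rw [← div_eq_mul_inv, div_div, div_le_div_iff₀ (by positivity) (by positivity)]
          have : 0 < l ^ 2 := by positivity
          nlinarith [mul_le_mul_of_nonneg_left hx1 this.le]
        have h10 : B * fejer (l * (u - y)) ≤ M * (1 + (u - y) ^ 2)⁻¹ := by
          calc _ ≤ B * (4 * (1 + (η⁻¹) ^ 2) / l ^ 2 * (1 + (u - y) ^ 2)⁻¹) := by gcongr
            _ = _ := by rw [hM]; ring
        linarith
  have hI1 : IntegrableOn ((Icc (y - l⁻¹) (y + l⁻¹)).indicator (fun _ => ε / 2)) (Ioi (0:ℝ)) := by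
    refine Integrable.integrableOn ?_
    rw [integrable_indicator_iff measurableSet_Icc]
    simp
  have hI2 := (inv_integrable M y).integrableOn (s := Ioi (0:ℝ))
  have hI3 : IntegrableOn (fun u => F u * fejer (l * (u - y))) (Ioi (0:ℝ)) := by
    refine ((fejer_integrable hl0 y).const_mul B).integrableOn.mono' ?_ ?_
    · exact (hF.mul (fejer_meas.comp (by fun_prop))).aestronglyMeasurable
    · filter_upwards [ae_restrict_mem measurableSet_Ioi] with u hu
      rw [norm_mul, Real.norm_of_nonneg (fejer_nonneg _), Real.norm_eq_abs]
      exact mul_le_mul_of_nonneg_right (hB u hu) (fejer_nonneg _)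
  have hmono := setIntegral_mono_on (hI1.sub hI2) hI3 measurableSet_Ioi hpt
  have e0 : ∫ u in Ioi (0:ℝ), ((Icc (y - l⁻¹) (y + l⁻¹)).indicator (fun _ => ε / 2) u
      - M * (1 + (u - y) ^ 2)⁻¹) = (∫ u in Ioi (0:ℝ), (Icc (y - l⁻¹) (y + l⁻¹)).indicator (fun _ => ε / 2) u)
      - ∫ u in Ioi (0:ℝ), M * (1 + (u - y) ^ 2)⁻¹ := integral_sub hI1 hI2
  have e1 : (∫ u in Ioi (0:ℝ), (Icc (y - l⁻¹) (y + l⁻¹)).indicator (fun _ => ε / 2) u) = ε / l := by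
    rw [setIntegral_indicator measurableSet_Icc]
    rw [inter_eq_right.2 (fun x hx => by have := hx.1; simp only [mem_Ioi]; linarith)]
    simp
    rw [max_eq_left (by linarith)]; field_simp; ring
  have e2 : ∫ u in Ioi (0:ℝ), M * (1 + (u - y) ^ 2)⁻¹ ≤ M * Real.pi := by
    calc _ ≤ ∫ u, M * (1 + (u - y) ^ 2)⁻¹ :=
          setIntegral_le_integral (inv_integrable M y) (Eventually.of_forall fun u => by positivity)
      _ = M * Real.pi := by
          rw [integral_const_mul, integral_sub_right_eq_self (fun u : ℝ => (1 + u ^ 2)⁻¹) y, integral_univ_inv_one_add_sq]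
  have e3 : M * Real.pi = Q / l ^ 2 := by rw [hM, hQ]; ring
  have hmono' : ε / l - Q / l ^ 2 ≤ ∫ u in Ioi (0:ℝ), F u * fejer (l * (u - y)) := by
    rw [← e3, ← e1]
    refine le_trans ?_ hmono
    show _ ≤ ∫ u in Ioi (0:ℝ), ((Icc (y - l⁻¹) (y + l⁻¹)).indicator (fun _ => ε / 2) u
      - M * (1 + (u - y) ^ 2)⁻¹)
    rw [e0]
    linarith
  have : Q / l ^ 2 < ε / l / 2 := by
    rw [div_div, div_lt_div_iff₀ (by positivity) (by positivity)]
    nlinarith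
  linarith [hmono', hy]

end CM
end

section
open Filter Topology MeasureTheory Set
namespace CM

noncomputable def tri (t : ℝ) : ℝ := max (1 - |t|) 0

lemma tri_nonneg (t : ℝ) : 0 ≤ tri t := le_max_right _ _
lemma tri_le_one (t : ℝ) : tri t ≤ 1 := max_le (by linarith [abs_nonneg t]) zero_le_one
lemma tri_cont : Continuous tri := by unfold tri; fun_prop
lemma tri_zero {t : ℝ} (h : 1 ≤ |t|) : tri t = 0 := max_eq_right (by linarith)
lemma tri_supp : HasCompactSupport tri := by
  refine HasCompactSupport.intro (isCompact_Icc (a := (-1:ℝ)) (b := 1)) fun t ht => tri_zero ?_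
  by_contra hc
  push Not at hc
  rw [abs_lt] at hc
  exact ht ⟨hc.1.le, hc.2.le⟩
lemma tri_integrable : Integrable tri := tri_cont.integrable_of_hasCompactSupport tri_supp

lemma tri_cos_integral (v : ℝ) : ∫ t, tri t * Real.cos (t * v) = fejer v := by
  have h1 : ∀ t, tri t * Real.cos (t * v) = (fun x => max (1 - x) 0 * Real.cos (x * v)) |t| := by
    intro t
    simp only [tri]
    congr 1
    rcases abs_cases t with ⟨h, _⟩ | ⟨h, _⟩ <;> rw [h]
    rw [neg_mul, Real.cos_neg]
  simp_rw [h1]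
  rw [integral_comp_abs (f := fun x => max (1 - x) 0 * Real.cos (x * v))]
  have h2 : ∫ x in Ioi (0:ℝ), max (1 - x) 0 * Real.cos (x * v)
      = ∫ x in (0:ℝ)..1, (1 - x) * Real.cos (x * v) := by
    rw [intervalIntegral.integral_of_le zero_le_one]
    rw [setIntegral_eq_of_subset_of_forall_sdiff_eq_zero (s := Ioc (0:ℝ) 1) measurableSet_Ioi
      (fun x hx => hx.1)]
    · refine setIntegral_congr_fun measurableSet_Ioc fun x hx => ?_
      show max (1 - x) 0 * Real.cos (x * v) = (1 - x) * Real.cos (x * v)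
      rw [max_eq_left (by linarith [hx.2])]
    · intro x hx
      have : 1 < x := by
        by_contra hc
        exact hx.2 ⟨hx.1, not_lt.1 hc⟩
      rw [max_eq_right (by linarith), zero_mul]
  rw [h2]
  by_cases hv : v = 0
  · subst hv
    have : ∫ x in (0:ℝ)..1, (1 - x) = 1 / 2 := by
      rw [intervalIntegral.integral_sub (by simp) (by simp)]
      simp; norm_num
    simp [fejer, this]
  · have h3 : ∀ x ∈ uIcc (0:ℝ) 1, HasDerivAt (fun x => (1 - x) * Real.sin (x * v) / v - Real.cos (x * v) / v ^ 2)
        ((1 - x) * Real.cos (x * v)) x := by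
      intro x _
      have hs : HasDerivAt (fun x => Real.sin (x * v)) (Real.cos (x * v) * v) x := by
        simpa using ((hasDerivAt_id x).mul_const v).sin
      have hc : HasDerivAt (fun x => Real.cos (x * v)) (-Real.sin (x * v) * v) x := by
        simpa using ((hasDerivAt_id x).mul_const v).cos
      have h1 : HasDerivAt (fun x : ℝ => 1 - x) (-1) x := by
        simpa using (hasDerivAt_id x).const_sub 1
      refine (((h1.mul hs).div_const v).sub (hc.div_const (v ^ 2))).congr_deriv ?_
      field_simp
      ring
    rw [intervalIntegral.integral_eq_sub_of_hasDerivAt h3 (by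
      apply Continuous.intervalIntegrable; fun_prop)]
    simp [fejer, hv]
    field_simp
    ring

lemma fejer_eq (v : ℝ) :
    ((fejer v : ℝ) : ℂ) = ∫ t, (tri t : ℂ) * Complex.exp (Complex.I * t * v) := by
  have hI : Integrable (fun t : ℝ => (tri t : ℂ) * Complex.exp (Complex.I * t * v)) := by
    refine tri_integrable.mono' ?_ (Eventually.of_forall fun t => ?_)
    · have := tri_cont
      exact (by fun_prop : Continuous _).aestronglyMeasurable
    · rw [norm_mul, Complex.norm_real, Real.norm_of_nonneg (tri_nonneg t)]
      have : Complex.I * t * v = ((t * v : ℝ) : ℂ) * Complex.I := by push_cast; ring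
      rw [this, Complex.norm_exp_ofReal_mul_I, mul_one]
  have hn := integral_neg_eq_self (fun t : ℝ => (tri t : ℂ) * Complex.exp (Complex.I * t * v)) volume
  have h2 : ∫ t, ((tri t : ℂ) * Complex.exp (Complex.I * t * v) + (fun t : ℝ => (tri t : ℂ) * Complex.exp (Complex.I * t * v)) (-t))
      = ∫ t, ((2 * (tri t * Real.cos (t * v)) : ℝ) : ℂ) := by
    congr 1; ext t
    have : tri (-t) = tri t := by simp [tri]
    simp only [this]
    push_cast
    rw [Complex.cos]
    have e1 : Complex.I * -(t:ℂ) * v = -(t * v) * Complex.I := by ring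
    have e2 : Complex.I * (t:ℂ) * v = (t * v) * Complex.I := by ring
    rw [e1, e2]; ring
  rw [integral_add hI hI.comp_neg, hn, integral_complex_ofReal, integral_const_mul, tri_cos_integral] at h2
  push_cast at h2
  linear_combination -h2 / 2

lemma J_eq (F : ℝ → ℝ) (hF : Measurable F) (B : ℝ) (hB : ∀ u, 0 < u → |F u| ≤ B)
    (G : ℂ → ℂ)
    (hG : ∀ z : ℂ, 0 < z.re → ∫ u in Ioi (0:ℝ), (F u : ℂ) * Complex.exp (-z * u) = G z)
    (l y d : ℝ) (hd : 0 < d) :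
    ∫ u in Ioi (0:ℝ), ((F u * Real.exp (-d * u) * fejer (l * (u - y)) : ℝ) : ℂ) =
      ∫ t, (tri t : ℂ) * Complex.exp (-(Complex.I * t * (l * y))) * G (d - Complex.I * t * l) := by
  have h1 : ∀ u : ℝ, ((F u * Real.exp (-d * u) * fejer (l * (u - y)) : ℝ) : ℂ)
      = ∫ t, (F u * Real.exp (-d * u) : ℂ) * ((tri t : ℂ) * Complex.exp (Complex.I * t * (l * (u - y)))) := by
    intro u
    rw [integral_const_mul]
    have := fejer_eq (l * (u - y))
    push_cast at this ⊢
    rw [this]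
  simp_rw [h1]
  rw [integral_integral_swap]
  · congr 1; ext t
    rw [← hG _ (by simpa using hd), ← integral_const_mul]
    congr 1; ext u
    have : Complex.exp (-(↑d - Complex.I * ↑t * ↑l) * ↑u) = Complex.exp (-d * u) * Complex.exp (Complex.I * t * l * u) := by
      rw [← Complex.exp_add]; ring_nf
    rw [this]
    have : Complex.exp (Complex.I * ↑t * (↑l * (↑u - ↑y))) = Complex.exp (Complex.I * t * l * u) * Complex.exp (-(Complex.I * t * (l * y))) := by
      rw [← Complex.exp_add]; ring_nf
    rw [this]
    push_cast
    ring
  · have hu : Integrable (fun u => B * Real.exp (-d * u)) (volume.restrict (Ioi (0:ℝ))) :=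
      (exp_neg_integrableOn_Ioi 0 hd).const_mul B
    have := hu.mul_prod tri_integrable
    refine this.mono' ?_ ?_
    · have := tri_cont
      refine Measurable.aestronglyMeasurable ?_
      simp only [Function.uncurry_def]
      have hm : Measurable tri := this.measurable
      fun_prop
    · have : ∀ᵐ z : ℝ × ℝ ∂((volume.restrict (Ioi (0:ℝ))).prod volume), 0 < z.1 := by
        have h := (Measure.quasiMeasurePreserving_fst (μ := volume.restrict (Ioi (0:ℝ))) (ν := (volume : Measure ℝ))).ae
          (ae_restrict_mem (μ := volume) (measurableSet_Ioi (a := (0:ℝ))))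
        exact h
      filter_upwards [this] with z hz
      simp only [Function.uncurry_def]
      rw [norm_mul, norm_mul, norm_mul]
      have e1 : Complex.I * z.2 * (l * (z.1 - y)) = ((z.2 * (l * (z.1 - y)) : ℝ) : ℂ) * Complex.I := by
        push_cast; ring
      rw [e1, Complex.norm_exp_ofReal_mul_I, Complex.norm_real, Complex.norm_real, mul_one, Complex.norm_real,
        Real.norm_of_nonneg (tri_nonneg _), Real.norm_of_nonneg (Real.exp_pos _).le, Real.norm_eq_abs]
      gcongr
      · exact tri_nonneg _
      · exact hB _ hz

lemma J_eq0 (F : ℝ → ℝ) (hF : Measurable F) (B : ℝ) (hB : ∀ u, 0 < u → |F u| ≤ B)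
    (G : ℂ → ℂ) (hGc : ContinuousOn G {z | 0 ≤ z.re})
    (hG : ∀ z : ℂ, 0 < z.re → ∫ u in Ioi (0:ℝ), (F u : ℂ) * Complex.exp (-z * u) = G z)
    (l y : ℝ) (hl : 0 < l) :
    ∫ u in Ioi (0:ℝ), ((F u * fejer (l * (u - y)) : ℝ) : ℂ) =
      ∫ t, (tri t : ℂ) * Complex.exp (-(Complex.I * t * (l * y))) * G (- Complex.I * t * l) := by
  have hB0 : 0 ≤ B := (abs_nonneg _).trans (hB 1 one_pos)
  have hnorm : ∀ t : ℝ, ‖Complex.exp (-(Complex.I * t * (l * y)))‖ = 1 := fun t => by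
    have : -(Complex.I * t * (l * y)) = ((-(t * (l * y)) : ℝ) : ℂ) * Complex.I := by push_cast; ring
    rw [this, Complex.norm_exp_ofReal_mul_I]
  have T1 : Tendsto (fun d : ℝ => ∫ u in Ioi (0:ℝ), ((F u * Real.exp (-d * u) * fejer (l * (u - y)) : ℝ) : ℂ))
      (𝓝[>] 0) (𝓝 (∫ u in Ioi (0:ℝ), ((F u * fejer (l * (u - y)) : ℝ) : ℂ))) := by
    refine tendsto_integral_filter_of_dominated_convergence (fun u => B * fejer (l * (u - y))) ?_ ?_ ?_ ?_
    · refine Eventually.of_forall fun d => Measurable.aestronglyMeasurable ?_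
      have := fejer_meas
      fun_prop
    · filter_upwards [self_mem_nhdsWithin] with d hd
      filter_upwards [ae_restrict_mem measurableSet_Ioi] with u hu
      rw [Complex.norm_real, norm_mul, norm_mul, Real.norm_of_nonneg (fejer_nonneg _), Real.norm_of_nonneg (Real.exp_pos _).le, Real.norm_eq_abs]
      have h1 : Real.exp (-d * u) ≤ 1 := by
        rw [Real.exp_le_one_iff]
        have : 0 < d * u := mul_pos hd hu
        linarith
      have h2 := hB u hu
      have h3 := fejer_nonneg (l * (u - y))
      refine mul_le_mul_of_nonneg_right ?_ h3
      calc _ ≤ B * 1 := mul_le_mul h2 h1 (Real.exp_pos _).le hB0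
        _ = B := mul_one _
    · exact ((fejer_integrable hl y).const_mul B).integrableOn
    · filter_upwards with u
      have : Continuous (fun d : ℝ => ((F u * Real.exp (-d * u) * fejer (l * (u - y)) : ℝ) : ℂ)) := by
        fun_prop
      have h := this.tendsto 0
      simp only [neg_zero, zero_mul, Real.exp_zero, mul_one] at h
      exact h.mono_left nhdsWithin_le_nhds
  -- compact bound of G
  have hK : IsCompact (Icc (0:ℝ) 1 ×ℂ Icc (-l) l) := isCompact_Icc.reProdIm isCompact_Icc
  obtain ⟨A, hA⟩ := hK.exists_bound_of_continuousOn (hGc.mono (fun z hz => (Complex.mem_reProdIm.1 hz).1.1))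
  have T2 : Tendsto (fun d : ℝ => ∫ t, (tri t : ℂ) * Complex.exp (-(Complex.I * t * (l * y))) * G (d - Complex.I * t * l))
      (𝓝[>] 0) (𝓝 (∫ t, (tri t : ℂ) * Complex.exp (-(Complex.I * t * (l * y))) * G (- Complex.I * t * l))) := by
    refine tendsto_integral_filter_of_dominated_convergence (fun t => tri t * A) ?_ ?_ ?_ ?_
    · filter_upwards [self_mem_nhdsWithin] with d hd
      have hc : Continuous (fun t : ℝ => G (d - Complex.I * t * l)) := by
        refine hGc.comp_continuous (by fun_prop) fun t => ?_
        simpa using (le_of_lt hd)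
      have := tri_cont
      exact ((by fun_prop : Continuous (fun t : ℝ => (tri t : ℂ) *
        Complex.exp (-(Complex.I * t * (l * y))))).mul hc).aestronglyMeasurable
    · have : ∀ᶠ d : ℝ in 𝓝[>] 0, d < 1 := nhdsWithin_le_nhds (gt_mem_nhds one_pos)
      filter_upwards [self_mem_nhdsWithin, this] with d hd hd1
      refine Eventually.of_forall fun t => ?_
      rw [norm_mul, norm_mul, hnorm, Complex.norm_real, Real.norm_of_nonneg (tri_nonneg t), mul_one]
      by_cases ht : 1 ≤ |t|
      · simp [tri_zero ht]
      · refine mul_le_mul_of_nonneg_left (hA _ ?_) (tri_nonneg t)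
        push Not at ht
        rw [abs_lt] at ht
        rw [Complex.mem_reProdIm]
        simp only [mem_Icc]
        refine ⟨⟨?_, ?_⟩, ?_, ?_⟩ <;> simp
        · exact le_of_lt hd
        · exact hd1.le
        · nlinarith
        · nlinarith
    · exact tri_integrable.mul_const A
    · filter_upwards with t
      refine Tendsto.const_mul _ ?_
      have h1 := hGc (-Complex.I * t * l) (by simp)
      refine h1.tendsto.comp ?_
      refine tendsto_nhdsWithin_iff.2 ⟨?_, ?_⟩
      · have : Continuous (fun d : ℝ => (d:ℂ) - Complex.I * t * l) := by fun_prop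
        have h := this.tendsto 0
        simp only [Complex.ofReal_zero, zero_sub] at h
        rw [show -Complex.I * t * l = -(Complex.I * t * l) by ring]
        exact h.mono_left nhdsWithin_le_nhds
      · filter_upwards [self_mem_nhdsWithin] with d hd
        simpa using (le_of_lt hd)
  refine tendsto_nhds_unique (T1.congr' ?_) T2
  filter_upwards [self_mem_nhdsWithin] with d hd
  exact J_eq F hF B hB G hG l y d hd

lemma J_tendsto (F : ℝ → ℝ) (hF : Measurable F) (B : ℝ) (hB : ∀ u, 0 < u → |F u| ≤ B)
    (G : ℂ → ℂ) (hGc : ContinuousOn G {z | 0 ≤ z.re})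
    (hG : ∀ z : ℂ, 0 < z.re → ∫ u in Ioi (0:ℝ), (F u : ℂ) * Complex.exp (-z * u) = G z)
    (l : ℝ) (hl : 0 < l) :
    Tendsto (fun y => ∫ u in Ioi (0:ℝ), F u * fejer (l * (u - y))) atTop (𝓝 0) := by
  have R := Real.tendsto_integral_exp_smul_cocompact (fun t : ℝ => (tri t : ℂ) * G (- Complex.I * t * l))
  have hy : Tendsto (fun y : ℝ => (l / (2 * Real.pi)) * y) atTop (cocompact ℝ) :=
    (tendsto_id.const_mul_atTop (by positivity)).mono_right atTop_le_cocompact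
  have R2 := R.comp hy
  have R3 : Tendsto (fun y => ((∫ u in Ioi (0:ℝ), F u * fejer (l * (u - y)) : ℝ) : ℂ)) atTop (𝓝 0) := by
    refine R2.congr fun y => ?_
    rw [← integral_complex_ofReal, J_eq0 F hF B hB G hGc hG l y hl]
    simp only [Function.comp]
    congr 1; ext t
    rw [Circle.smul_def, Real.fourierChar_apply, smul_eq_mul]
    have : ((2 * Real.pi * -(t * (l / (2 * Real.pi) * y)) : ℝ) : ℂ) * Complex.I = -(Complex.I * t * (l * y)) := by
      have : 2 * Real.pi * -(t * (l / (2 * Real.pi) * y)) = -(t * (l * y)) := by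
        field_simp
      rw [this]; push_cast; ring
    rw [this]; ring
  have := (Complex.continuous_re.tendsto 0).comp R3
  simpa [Function.comp_def] using this

theorem tauber (H : ℝ → ℝ) (hm : Monotone H) (hH : ∀ u, 0 ≤ H u) (C : ℝ)
    (hC : ∀ u, 0 < u → H u ≤ C * Real.exp u)
    (G : ℂ → ℂ) (hGc : ContinuousOn G {z | 0 ≤ z.re})
    (hG : ∀ z : ℂ, 0 < z.re →
      ∫ u in Ioi (0:ℝ), ((H u * Real.exp (-u) - 1 : ℝ) : ℂ) * Complex.exp (-z * u) = G z) :
    Tendsto (fun u => H u * Real.exp (-u)) atTop (𝓝 1) := by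
  set F : ℝ → ℝ := fun u => H u * Real.exp (-u) - 1 with hFdef
  have hFm : Measurable F := by
    have := hm.measurable
    fun_prop
  have hB : ∀ u, 0 < u → |F u| ≤ C + 1 := by
    intro u hu
    have h0 : 0 ≤ H u * Real.exp (-u) := mul_nonneg (hH u) (Real.exp_pos _).le
    have h1 : H u * Real.exp (-u) ≤ C := by
      calc _ ≤ C * Real.exp u * Real.exp (-u) := by gcongr; exact hC u hu
        _ = C := by rw [mul_assoc, ← Real.exp_add]; simp
    rw [abs_le]; constructor <;> simp only [hFdef] <;> linarith
  have hJ := J_tendsto F hFm (C + 1) hB G hGc hG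
  have hJneg : ∀ l, 0 < l → Tendsto (fun y => ∫ u in Ioi (0:ℝ), (-F u) * fejer (l * (u - y))) atTop (𝓝 0) := by
    intro l hl
    have := (hJ l hl).neg
    simp only [neg_zero] at this
    refine this.congr fun y => ?_
    rw [← integral_neg]; congr 1; ext u; ring
  have key : Tendsto F atTop (𝓝 0) := by
    rw [Metric.tendsto_nhds]
    intro ε' hε'
    set ε := min ε' (1/2) with hε
    have hε0 : 0 < ε := lt_min hε' (by norm_num)
    have hε1 : ε ≤ 1/2 := min_le_right _ _
    -- eta
    set η := Real.log (1 + ε / 4) / 2 with hη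
    have hη0 : 0 < η := by
      have : 0 < Real.log (1 + ε / 4) := Real.log_pos (by linarith)
      positivity
    have hexp : Real.exp (2 * η) = 1 + ε / 4 := by
      rw [hη, mul_div_cancel₀ _ (two_ne_zero), Real.exp_log (by linarith)]
    have c1 := core F hFm (C + 1) hB hJ (ε / 4) (by positivity) η hη0
    have c2 := core (fun u => - F u) hFm.neg (C + 1) (fun u hu => by rw [abs_neg]; exact hB u hu) hJneg
      (ε / 4) (by positivity) η hη0
    have c1' : ∀ᶠ y in atTop, ¬ (∀ u ∈ Icc (y + η - η) (y + η + η), ε / 4 ≤ F u) :=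
      (tendsto_atTop_add_const_right atTop η tendsto_id).eventually c1
    have c2' : ∀ᶠ y in atTop, ¬ (∀ u ∈ Icc (y - η - η) (y - η + η), ε / 4 ≤ - F u) :=
      (tendsto_atTop_add_const_right atTop (-η) tendsto_id).eventually c2
    filter_upwards [c1', c2'] with y h1 h2
    rw [Real.dist_eq, sub_zero]
    by_contra hc
    push Not at hc
    have hc' : ε ≤ |F y| := (min_le_left _ _).trans hc
    rcases le_abs.1 hc' with h | h
    · apply h1
      intro u hu
      have hu1 : y ≤ u := by linarith [hu.1]
      have hu2 : u ≤ y + 2 * η := by linarith [hu.2]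
      have hHy : (1 + ε) * Real.exp y ≤ H y := by
        have : 1 + ε ≤ H y * Real.exp (-y) := by simp only [hFdef] at h; linarith
        calc _ ≤ H y * Real.exp (-y) * Real.exp y := by gcongr
          _ = H y := by rw [mul_assoc, ← Real.exp_add]; simp
      have h3 : (1 + ε) * Real.exp y * Real.exp (-u) ≤ H u * Real.exp (-u) := by
        have := hm hu1
        gcongr; linarith
      have h4 : (1 + ε / 4)⁻¹ ≤ Real.exp y * Real.exp (-u) := by
        rw [← hexp, ← Real.exp_neg, ← Real.exp_add]
        gcongr; linarith
      have h5 : (1 + ε) * (1 + ε / 4)⁻¹ ≤ H u * Real.exp (-u) := by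
        calc _ ≤ (1 + ε) * (Real.exp y * Real.exp (-u)) := by gcongr
          _ ≤ _ := by linarith
      have h6 : 1 + ε / 4 ≤ (1 + ε) * (1 + ε / 4)⁻¹ := by
        rw [← div_eq_mul_inv, le_div_iff₀ (by linarith)]
        nlinarith
      simp only [hFdef]; linarith
    · apply h2
      intro u hu
      have hu1 : u ≤ y := by linarith [hu.2]
      have hu2 : y - 2 * η ≤ u := by linarith [hu.1]
      have hHy : H y ≤ (1 - ε) * Real.exp y := by
        have : H y * Real.exp (-y) ≤ 1 - ε := by simp only [hFdef] at h; linarith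
        calc H y = H y * Real.exp (-y) * Real.exp y := by rw [mul_assoc, ← Real.exp_add]; simp
          _ ≤ _ := by gcongr
      have h3 : H u * Real.exp (-u) ≤ (1 - ε) * Real.exp y * Real.exp (-u) := by
        have := hm hu1
        gcongr; linarith
      have h4 : Real.exp y * Real.exp (-u) ≤ 1 + ε / 4 := by
        rw [← hexp, ← Real.exp_add]
        gcongr; linarith
      have h5 : H u * Real.exp (-u) ≤ (1 - ε) * (1 + ε / 4) := by
        calc _ ≤ (1 - ε) * (Real.exp y * Real.exp (-u)) := by linarith
          _ ≤ _ := by gcongr; linarith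
      simp only [hFdef]; nlinarith
  have := key.add_const 1
  simpa [hFdef] using this

end CM
end

section
open Filter Topology MeasureTheory Set
namespace CM

theorem wiener_ikehara (f : ℕ → ℝ) (hf : ∀ n, 0 ≤ f n) (C : ℝ)
    (hC : ∀ x : ℝ, 1 ≤ x → ∑ k ∈ Finset.Icc 1 ⌊x⌋₊, f k ≤ C * x)
    (G : ℂ → ℂ) (hGc : ContinuousOn G {s | 1 ≤ s.re})
    (hG : ∀ s : ℂ, 1 < s.re → LSeries (fun n => (f n : ℂ)) s = G s + 1 / (s - 1)) :
    Tendsto (fun x : ℝ => (∑ k ∈ Finset.Icc 1 ⌊x⌋₊, f k) / x) atTop (𝓝 1) := by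
  set A : ℝ → ℝ := fun x => ∑ k ∈ Finset.Icc 1 ⌊x⌋₊, f k with hA
  have hAm : Monotone A := by
    intro x y hxy
    refine Finset.sum_le_sum_of_subset_of_nonneg ?_ fun _ _ _ => hf _
    exact Finset.Icc_subset_Icc le_rfl (Nat.floor_mono hxy)
  have hA0 : ∀ x, 0 ≤ A x := fun x => Finset.sum_nonneg fun _ _ => hf _
  have hm : Monotone (fun u => A (Real.exp u)) := hAm.comp Real.exp_monotone
  have hcont : ContinuousOn (fun z : ℂ => (G (1 + z) - 1) / (1 + z)) {z | 0 ≤ z.re} := by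
    refine ContinuousOn.div ?_ (by fun_prop) ?_
    · refine ContinuousOn.sub (hGc.comp (by fun_prop) ?_) continuousOn_const
      intro z hz
      simpa using hz
    · intro z hz h
      have := congrArg Complex.re h
      simp at this
      simp at hz
      linarith
  have hI : ∀ z : ℂ, 0 < z.re →
      ∫ u in Ioi (0:ℝ), ((A (Real.exp u) * Real.exp (-u) - 1 : ℝ) : ℂ) * Complex.exp (-z * u)
        = (G (1 + z) - 1) / (1 + z) := by
    intro z hz
    have hz0 : z ≠ 0 := fun h => by simp [h] at hz
    have hz1 : 1 + z ≠ 0 := fun h => by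
      have := congrArg Complex.re h
      simp at this
      linarith
    have hs : 1 < (1 + z).re := by simpa using hz
    have hO : (fun n : ℕ ↦ ∑ k ∈ Finset.Icc 1 n, f k) =O[atTop] fun n ↦ (n : ℝ) ^ (1:ℝ) := by
      refine Asymptotics.IsBigO.of_bound C ?_
      filter_upwards [eventually_ge_atTop 1] with n hn
      have := hC n (by exact_mod_cast hn)
      rw [Nat.floor_natCast] at this
      rw [Real.norm_of_nonneg (Finset.sum_nonneg fun _ _ => hf _), Real.rpow_one,
        Real.norm_of_nonneg (Nat.cast_nonneg _)]
      exact this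
    have h1 := LSeries_eq_mul_integral_of_nonneg f zero_le_one hs hO hf
    have hcv : ∫ t in Ioi (1 : ℝ), (∑ k ∈ Finset.Icc 1 ⌊t⌋₊, (f k : ℂ)) * (t : ℂ) ^ (-((1 + z) + 1))
        = ∫ u in Ioi (0:ℝ), ((A (Real.exp u) * Real.exp (-u) : ℝ) : ℂ) * Complex.exp (-z * u) := by
      have him : Real.exp '' Ioi 0 = Ioi 1 := by
        ext x
        simp only [mem_image, mem_Ioi]
        constructor
        · rintro ⟨u, hu, rfl⟩; exact Real.one_lt_exp_iff.2 hu
        · intro hx; exact ⟨Real.log x, Real.log_pos hx, Real.exp_log (by linarith)⟩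
      rw [← him, integral_image_eq_integral_abs_deriv_smul measurableSet_Ioi
        (fun x _ => (Real.hasDerivAt_exp x).hasDerivWithinAt) Real.exp_injective.injOn]
      refine setIntegral_congr_fun measurableSet_Ioi fun u _ => ?_
      rw [abs_of_pos (Real.exp_pos u), Complex.real_smul]
      have e1 : ((Real.exp u : ℝ) : ℂ) ^ (-((1 + z) + 1)) = Complex.exp (-(2 + z) * u) := by
        rw [Complex.cpow_def_of_ne_zero (by exact_mod_cast (Real.exp_pos u).ne'), ← Complex.ofReal_log (Real.exp_pos u).le,
          Real.log_exp]
        ring_nf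
      rw [e1, hA]
      push_cast
      have e2 : Complex.exp (-(2 + z) * u) = Complex.exp (-u) * Complex.exp (-u) * Complex.exp (-z * u) := by
        rw [← Complex.exp_add, ← Complex.exp_add]; ring_nf
      have e3 : Complex.exp u * Complex.exp (-u) = 1 := by rw [← Complex.exp_add]; simp
      rw [e2]
      linear_combination (∑ k ∈ Finset.Icc 1 ⌊Real.exp u⌋₊, (f k : ℂ)) * Complex.exp (-u) * Complex.exp (-z * u) * e3
    have hexp : IntegrableOn (fun u : ℝ => Complex.exp (-z * u)) (Ioi 0) :=
      integrableOn_exp_mul_complex_Ioi (by simpa using hz) 0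
    have hIntg : IntegrableOn (fun u : ℝ => ((A (Real.exp u) * Real.exp (-u) : ℝ) : ℂ) * Complex.exp (-z * u)) (Ioi 0) := by
      refine (hexp.norm.const_mul C).mono' ?_ ?_
      · have : Measurable (fun u => A (Real.exp u)) := hm.measurable
        exact (by fun_prop : Measurable _).aestronglyMeasurable
      · filter_upwards [ae_restrict_mem measurableSet_Ioi] with u hu
        rw [norm_mul, Complex.norm_real, Real.norm_of_nonneg (mul_nonneg (hA0 _) (Real.exp_pos _).le)]
        gcongr
        have := hC (Real.exp u) (Real.one_le_exp (le_of_lt hu))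
        calc A (Real.exp u) * Real.exp (-u) ≤ C * Real.exp u * Real.exp (-u) := by gcongr
          _ = C := by rw [mul_assoc, ← Real.exp_add]; simp
    have hlast : ∫ u in Ioi (0:ℝ), Complex.exp (-z * u) = 1 / z := by
      rw [integral_exp_mul_complex_Ioi (by simpa using hz) 0]
      simp
    have : ∀ u : ℝ, ((A (Real.exp u) * Real.exp (-u) - 1 : ℝ) : ℂ) * Complex.exp (-z * u)
        = ((A (Real.exp u) * Real.exp (-u) : ℝ) : ℂ) * Complex.exp (-z * u) - Complex.exp (-z * u) := by
      intro u; push_cast; ring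
    simp_rw [this]
    rw [integral_sub hIntg hexp, hlast, ← hcv]
    rw [hG _ hs, add_sub_cancel_left] at h1
    have h2 : ∫ t in Ioi (1 : ℝ), (∑ k ∈ Finset.Icc 1 ⌊t⌋₊, (f k : ℂ)) * (t : ℂ) ^ (-((1 + z) + 1)) = (G (1 + z) + 1 / z) / (1 + z) := by
      rw [h1]; field_simp
    rw [h2]
    field_simp
    ring
  have := tauber (fun u => A (Real.exp u)) hm (fun u => hA0 _) C
    (fun u hu => hC _ (Real.one_le_exp hu.le)) _ hcont hI
  have h3 := this.comp Real.tendsto_log_atTop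
  refine h3.congr' ?_
  filter_upwards [eventually_gt_atTop 0] with x hx
  simp only [Function.comp]
  rw [Real.exp_neg, Real.exp_log hx, div_eq_mul_inv]

end CM
end

section
open Finset
namespace CM

section
variable {p : ℕ} [Fact p.Prime]

local notation "φ" => quadraticChar (ZMod p)

noncomputable def Ssum (p : ℕ) [Fact p.Prime] (k : ZMod p) : ℤ := ∑ x : ZMod p, quadraticChar (ZMod p) (x ^ 3 + k * x)

lemma rc (hp : p ≠ 2) : ringChar (ZMod p) ≠ 2 := by rwa [ZMod.ringChar_zmod_n]

lemma card_eq (hp : p ≠ 2) :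
    (Nat.card {xy : ZMod p × ZMod p // xy.2 ^ 2 = xy.1 ^ 3 + xy.1} : ℤ) = p + Ssum p 1 := by
  have h1 : Nat.card {xy : ZMod p × ZMod p // xy.2 ^ 2 = xy.1 ^ 3 + xy.1}
      = ∑ x : ZMod p, Nat.card {y : ZMod p // y ^ 2 = x ^ 3 + x} := by
    rw [← Nat.card_sigma]
    refine Nat.card_congr ⟨fun z => ⟨z.1.1, z.1.2, z.2⟩, fun z => ⟨(z.1, z.2.1), z.2.2⟩, fun _ => rfl, fun _ => rfl⟩
  rw [h1]
  push_cast
  have h2 : ∀ x : ZMod p, (Nat.card {y : ZMod p // y ^ 2 = x ^ 3 + x} : ℤ) = φ (x ^ 3 + x) + 1 := by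
    intro x
    rw [← quadraticChar_card_sqrts (rc hp), Set.toFinset_card, Nat.card_eq_fintype_card]
    rfl
  simp_rw [h2]
  rw [sum_add_distrib, Ssum]
  simp [ZMod.card, add_comm]

lemma Ssum_zero (hp : p ≠ 2) : Ssum p 0 = 0 := by
  have : ∀ x : ZMod p, φ (x ^ 3 + 0 * x) = φ x := by
    intro x
    by_cases hx : x = 0
    · subst hx; simp
    · rw [zero_mul, add_zero, pow_succ, map_mul, quadraticChar_sq_one' hx, one_mul]
  simp only [Ssum, this]
  exact quadraticChar_sum_zero (rc hp)

lemma Ssum_mul (k c : ZMod p) (hc : c ≠ 0) : Ssum p (k * c ^ 2) = φ c * Ssum p k := by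
  simp only [Ssum]
  rw [← Equiv.sum_comp (Equiv.mulLeft₀ c hc), mul_sum]
  refine sum_congr rfl fun x _ => ?_
  simp only [Equiv.mulLeft₀_apply]
  have : (c * x) ^ 3 + k * c ^ 2 * (c * x) = c ^ 2 * (c * (x ^ 3 + k * x)) := by ring
  rw [this, map_mul, map_mul, quadraticChar_sq_one' hc, one_mul]

lemma Ssum_three (hp4 : p % 4 = 3) : Ssum p 1 = 0 := by
  have hp : p ≠ 2 := by rintro rfl; simp at hp4
  have hneg : φ (-1) = -1 := by
    rw [quadraticChar_neg_one (rc hp), ZMod.card]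
    exact ZMod.χ₄_nat_three_mod_four hp4
  have : Ssum p 1 = - Ssum p 1 := by
    conv_lhs => rw [Ssum, ← Equiv.sum_comp (Equiv.neg _)]
    rw [Ssum, ← sum_neg_distrib]
    refine sum_congr rfl fun x _ => ?_
    simp only [Equiv.neg_apply]
    have : (-x) ^ 3 + 1 * (-x) = (-1) * (x ^ 3 + 1 * x) := by ring
    rw [this, map_mul, hneg]; ring
  linarith

lemma inner_sum (hp : p ≠ 2) (a b : ZMod p) (hab : a ≠ b) :
    ∑ k : ZMod p, φ ((a + k) * (b + k)) = -1 := by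
  have hne : φ ≠ 1 := quadraticChar_ne_one (rc hp)
  have hj := jacobiSum_nontrivial_inv hne
  have hinv : (φ)⁻¹ = φ := (quadraticChar_isQuadratic (ZMod p)).inv
  rw [hinv, jacobiSum] at hj
  have hc : b - a ≠ 0 := sub_ne_zero.2 hab.symm
  -- k = -a - (b - a) x
  have h1 : ∑ k : ZMod p, φ ((a + k) * (b + k)) = ∑ x : ZMod p, φ (-1) * (φ x * φ (1 - x)) := by
    rw [← Equiv.sum_comp ((Equiv.mulLeft₀ (-(b - a)) (neg_ne_zero.2 hc)).trans (Equiv.addLeft (-a)))]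
    refine sum_congr rfl fun x _ => ?_
    simp only [Equiv.trans_apply, Equiv.mulLeft₀_apply, Equiv.coe_addLeft]
    have : (a + (-a + -(b - a) * x)) * (b + (-a + -(b - a) * x)) = (b - a) ^ 2 * (-1 * (x * (1 - x))) := by ring
    rw [this, map_mul, quadraticChar_sq_one' hc, one_mul, map_mul, map_mul]
  rw [h1, ← mul_sum, hj]
  have : φ (-1) * φ (-1) = 1 := by rw [← map_mul]; simp
  linarith

lemma sum_sq (hp4 : p % 4 = 1) : ∑ k : ZMod p, (Ssum p k) ^ 2 = 2 * p * (p - 1) := by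
  have hp : p ≠ 2 := by rintro rfl; simp at hp4
  have hneg : φ (-1) = 1 := by
    rw [quadraticChar_neg_one (rc hp), ZMod.card]
    exact ZMod.χ₄_nat_one_mod_four hp4
  have h1 : ∀ k : ZMod p, (Ssum p k) ^ 2 = ∑ x : ZMod p, ∑ y : ZMod p, φ (x * y) * φ ((x ^ 2 + k) * (y ^ 2 + k)) := by
    intro k
    rw [sq, Ssum, sum_mul_sum]
    refine sum_congr rfl fun x _ => sum_congr rfl fun y _ => ?_
    rw [← map_mul, ← map_mul]; ring_nf
  simp_rw [h1]
  rw [sum_comm]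
  have h2 : ∀ x : ZMod p, ∑ k : ZMod p, ∑ y : ZMod p, φ (x * y) * φ ((x ^ 2 + k) * (y ^ 2 + k))
      = if x = 0 then 0 else (2 * p : ℤ) := by
    intro x
    rw [sum_comm]
    split_ifs with hx
    · subst hx; simp
    have h3 : ∀ y : ZMod p, ∑ k : ZMod p, φ (x * y) * φ ((x ^ 2 + k) * (y ^ 2 + k))
        = φ (x * y) * (-1) + ((if y = x then (p:ℤ) else 0) + (if y = -x then (p:ℤ) else 0)) := by
      intro y
      rw [← mul_sum]
      by_cases hxy : x ^ 2 = y ^ 2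
      · have h4 : ∑ k : ZMod p, φ ((x ^ 2 + k) * (y ^ 2 + k)) = p - 1 := by
          rw [← hxy, ← Equiv.sum_comp (Equiv.subRight (x ^ 2))]
          have : ∀ k : ZMod p, φ ((x ^ 2 + (Equiv.subRight (x ^ 2)) k) * (x ^ 2 + (Equiv.subRight (x ^ 2)) k))
              = 1 - if k = 0 then 1 else 0 := by
            intro k
            simp only [Equiv.subRight_apply, add_sub_cancel]
            split_ifs with hk
            · subst hk; simp
            · rw [← sq, quadraticChar_sq_one' hk]; simp
          simp_rw [this, sum_sub_distrib]
          simp [ZMod.card]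
        rw [h4]
        have hxx : x ≠ -x := by
          intro h
          have h2x : (2:ZMod p) * x = 0 := by linear_combination h
          rcases mul_eq_zero.1 h2x with h | h
          · exact (Ring.two_ne_zero (rc hp)) h
          · exact hx h
        rcases sq_eq_sq_iff_eq_or_eq_neg.1 hxy with h | h
        · subst h
          rw [← sq, quadraticChar_sq_one' hx]
          simp [hxx]; ring
        · have h' : y = -x := by rw [h, neg_neg]
          subst h'
          rw [show x * -x = -1 * x ^ 2 by ring, map_mul, hneg, quadraticChar_sq_one' hx]
          simp [hxx.symm]; ring
      · rw [inner_sum hp _ _ hxy]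
        have e1 : y ≠ x := fun h => hxy (by rw [h])
        have e2 : y ≠ -x := fun h => hxy (by rw [h]; ring)
        simp [e1, e2]
    simp_rw [h3]
    rw [sum_add_distrib, ← sum_mul, sum_add_distrib]
    have : ∑ y : ZMod p, φ (x * y) = 0 := by
      simp_rw [map_mul]
      rw [← mul_sum, quadraticChar_sum_zero (rc hp), mul_zero]
    rw [this]
    simp; ring
  simp_rw [h2]
  have : ∀ x : ZMod p, (if x = 0 then 0 else (2 * p : ℤ)) = 2 * p - (if x = 0 then (2 * p:ℤ) else 0) := by
    intro x; split_ifs <;> ring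
  simp_rw [this, sum_sub_distrib]
  simp [ZMod.card]; ring

lemma exists_nonsq (hp : p ≠ 2) : ∃ n : ZMod p, φ n = -1 := quadraticChar_exists_neg_one (rc hp)

lemma four_p (hp4 : p % 4 = 1) : ∃ n : ZMod p, (Ssum p 1) ^ 2 + (Ssum p n) ^ 2 = 4 * p := by
  have hp : p ≠ 2 := by rintro rfl; simp at hp4
  obtain ⟨n, hn⟩ := exists_nonsq (p := p) hp
  have hn0 : n ≠ 0 := by rintro rfl; simp at hn
  refine ⟨n, ?_⟩
  have hsq : ∀ c : ZMod p, c ≠ 0 → (φ c) ^ 2 = 1 := fun c hc => quadraticChar_sq_one hc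
  have h1 : ∀ k : ZMod p, 2 * (Ssum p k) ^ 2 =
      (1 - if k = 0 then 1 else 0) * ((Ssum p 1) ^ 2 + (Ssum p n) ^ 2) + φ k * ((Ssum p 1) ^ 2 - (Ssum p n) ^ 2) := by
    intro k
    by_cases hk : k = 0
    · subst hk; simp [Ssum_zero hp]
    rw [if_neg hk]
    rcases quadraticChar_dichotomy hk with h | h
    · obtain ⟨c, hc⟩ := (quadraticChar_one_iff_isSquare hk).1 h
      have hc0 : c ≠ 0 := by rintro rfl; simp at hc; exact hk hc
      have : Ssum p k = φ c * Ssum p 1 := by rw [← Ssum_mul 1 c hc0, one_mul, sq, hc]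
      rw [this, mul_pow, hsq c hc0, h]; ring
    · have hkn : φ (k * n⁻¹) = 1 := by
        have h3 : φ (k * n⁻¹) * φ n = -1 := by
          rw [← map_mul, mul_assoc, inv_mul_cancel₀ hn0, mul_one, h]
        rw [hn] at h3; linarith
      obtain ⟨c, hc⟩ := (quadraticChar_one_iff_isSquare (mul_ne_zero hk (inv_ne_zero hn0))).1 hkn
      have hc0 : c ≠ 0 := by
        rintro rfl
        simp at hc
        rcases hc with h | h
        · exact hk h
        · exact hn0 h
      have hkc : k = n * c ^ 2 := by
        rw [sq, ← hc]; field_simp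
      have : Ssum p k = φ c * Ssum p n := by rw [← Ssum_mul n c hc0, ← hkc]
      rw [this, mul_pow, hsq c hc0, h]; ring
  have h2 := Finset.sum_congr (rfl : (univ : Finset (ZMod p)) = univ) (fun k _ => h1 k)
  rw [← mul_sum, sum_sq hp4, sum_add_distrib, ← sum_mul, ← sum_mul, quadraticChar_sum_zero (rc hp), sum_sub_distrib] at h2
  simp [ZMod.card] at h2
  have hp1 : (p : ℤ) - 1 ≠ 0 := by
    have := (Fact.out : p.Prime).one_lt
    omega
  apply mul_left_cancel₀ hp1
  linarith

lemma parity (hp4 : p % 4 = 1) : (4:ℤ) ∣ Ssum p 1 - 2 := by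
  have hp : p ≠ 2 := by rintro rfl; simp at hp4
  have hneg : φ (-1) = 1 := by
    rw [quadraticChar_neg_one (rc hp), ZMod.card]
    exact ZMod.χ₄_nat_one_mod_four hp4
  obtain ⟨i, hi⟩ := (quadraticChar_one_iff_isSquare (neg_ne_zero.2 one_ne_zero)).1 hneg
  have hi0 : i ≠ 0 := by
    rintro rfl; simp at hi
  have hii : i ≠ -i := by
    intro h
    have h2x : (2:ZMod p) * i = 0 := by linear_combination h
    rcases mul_eq_zero.1 h2x with h | h
    · exact (Ring.two_ne_zero (rc hp)) h
    · exact hi0 h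
  have hni : φ (-i) = φ i := by rw [← neg_one_mul, map_mul, hneg, one_mul]
  have h1 : ∑ x : ZMod p, φ (x ^ 2 + 1) = -1 := by
    have h := inner_sum (p := p) hp i (-i) hii
    rw [← h]
    refine sum_congr rfl fun x _ => ?_
    congr 1
    linear_combination -hi
  have h2 : (4:ℤ) ∣ ∑ x : ZMod p, ((1 + φ x) * (1 + φ (x ^ 2 + 1)) -
      ((if x = 0 then 2 else 0) + (if x = i then 1 + φ i else 0) + (if x = -i then 1 + φ i else 0))) := by
    refine dvd_sum fun x _ => ?_
    by_cases h0 : x = 0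
    · subst h0; simp [hi0, hi0.symm]
    by_cases h1 : x = i
    · subst h1
      have : x ^ 2 + 1 = 0 := by linear_combination -hi
      rw [this]; simp [hi0, hii]
    by_cases h2 : x = -i
    · subst h2
      have : (-i) ^ 2 + 1 = 0 := by linear_combination -hi
      rw [this]; simp [hi0, hii.symm, hni]
    simp only [h0, h1, h2, if_false, add_zero, sub_zero]
    have h3 : x ^ 2 + 1 ≠ 0 := by
      intro h
      have : (x - i) * (x + i) = 0 := by linear_combination h + hi
      rcases mul_eq_zero.1 this with h | h
      · exact h1 (sub_eq_zero.1 h)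
      · exact h2 (eq_neg_of_add_eq_zero_left h)
    rcases quadraticChar_dichotomy h0 with h | h <;> rcases quadraticChar_dichotomy h3 with h' | h' <;>
      rw [h, h'] <;> norm_num
  rw [sum_sub_distrib] at h2
  have h3 : ∑ x : ZMod p, (1 + φ x) * (1 + φ (x ^ 2 + 1)) = p - 1 + Ssum p 1 := by
    have : ∀ x : ZMod p, (1 + φ x) * (1 + φ (x ^ 2 + 1)) = 1 + φ x + φ (x ^ 2 + 1) + φ (x ^ 3 + 1 * x) := by
      intro x
      rw [show x ^ 3 + 1 * x = x * (x ^ 2 + 1) by ring, map_mul]; ring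
    simp_rw [this, sum_add_distrib]
    rw [h1, quadraticChar_sum_zero (rc hp), Ssum]
    simp [ZMod.card]; ring
  rw [h3] at h2
  simp only [sum_add_distrib, sum_ite_eq', mem_univ, if_true] at h2
  have hφ : φ i = 1 ∨ φ i = -1 := quadraticChar_dichotomy hi0
  have : (p:ℤ) % 4 = 1 := by exact_mod_cast hp4
  rcases hφ with h | h <;> rw [h] at h2 <;> omega

end

/-- trace of Frobenius -/
noncomputable def ap (p : ℕ) : ℝ :=
  (p : ℝ) - (Nat.card {xy : ZMod p × ZMod p // xy.2 ^ 2 = xy.1 ^ 3 + xy.1} : ℝ)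

lemma ap_three {p : ℕ} (hp : p.Prime) (h : p % 4 = 3) : ap p = 0 := by
  have := Fact.mk hp
  have hp : p ≠ 2 := by rintro rfl; simp at h
  have h1 := card_eq hp
  rw [Ssum_three h] at h1
  have h2 : (Nat.card {xy : ZMod p × ZMod p // xy.2 ^ 2 = xy.1 ^ 3 + xy.1} : ℝ) = p := by exact_mod_cast h1
  rw [ap, h2, sub_self]

lemma ap_one {p : ℕ} (hp : p.Prime) (h : p % 4 = 1) :
    ∃ a b : ℤ, a % 2 = 1 ∧ b % 2 = 0 ∧ a ^ 2 + b ^ 2 = p ∧ (ap p) ^ 2 = 4 * a ^ 2 := by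
  have := Fact.mk hp
  have hp : p ≠ 2 := by rintro rfl; simp at h
  have h1 := card_eq hp
  obtain ⟨n, hn⟩ := four_p (p := p) h
  obtain ⟨m, hm⟩ := parity (p := p) h
  set S1 := Ssum p 1
  set Sn := Ssum p n
  have hS1 : S1 = 2 * (2 * m + 1) := by linarith
  have hev : Even (Sn ^ 2) := by
    refine ⟨2 * p - 2 * (2 * m + 1) ^ 2, ?_⟩
    rw [hS1] at hn; linarith
  have hev' : Even Sn := by
    rwa [Int.even_pow' two_ne_zero] at hev
  obtain ⟨b, hb⟩ := hev'
  have hab : (2 * m + 1) ^ 2 + b ^ 2 = (p:ℤ) := by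
    rw [hS1, hb] at hn; linarith
  refine ⟨2 * m + 1, b, by omega, ?_, hab, ?_⟩
  · rcases Int.even_or_odd b with h' | h'
    · exact Int.even_iff.1 h'
    · exfalso
      obtain ⟨c, hc⟩ := h'
      have : (p:ℤ) = 2 * (2 * m ^ 2 + 2 * m + 2 * c ^ 2 + 2 * c + 1) := by rw [← hab, hc]; ring
      omega
  · have h2 : (Nat.card {xy : ZMod p × ZMod p // xy.2 ^ 2 = xy.1 ^ 3 + xy.1} : ℝ) = p + (S1 : ℝ) := by exact_mod_cast h1
    rw [ap, h2, hS1]; push_cast; ring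

end CM
end

section
open Finset
namespace CM

/-- power sums of the local parameters -/
noncomputable def sseq (t d : ℝ) : ℕ → ℝ
  | 0 => 2
  | 1 => t
  | (k + 2) => t * sseq t d (k + 1) - d * sseq t d k

lemma newton (t d : ℝ) (u : ℕ → ℂ) (h1 : u 1 = t * u 0)
    (h2 : ∀ k, u (k + 2) = t * u (k + 1) - d * u k) (k : ℕ) :
    ∑ j ∈ range k, (sseq t d (j + 1) : ℂ) * u (k - (j + 1)) = k * u k ∧
    ∑ j ∈ range (k + 1), (sseq t d (j + 1) : ℂ) * u (k + 1 - (j + 1)) = (k + 1) * u (k + 1) := by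
  have h3 : ∀ k, (sseq t d (k + 2) : ℂ) * u 0 = u (k + 2) - d * u k ∧ (sseq t d (k + 3) : ℂ) * u 0 = u (k + 3) - d * u (k + 1) := by
    intro k
    induction k with
    | zero =>
      simp only [sseq, h2, h1]; push_cast; constructor <;> ring
    | succ n ih =>
      refine ⟨ih.2, ?_⟩
      have e : sseq t d (n + 1 + 3) = t * sseq t d (n + 3) - d * sseq t d (n + 2) := rfl
      rw [e]; push_cast
      rw [h2 (n + 2), h2 (n + 1), sub_mul, mul_assoc, mul_assoc, ih.1, ih.2, h2 (n + 1), h2 n]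
      ring
  induction k with
  | zero => simp [sseq, h1]
  | succ n ih =>
    obtain ⟨ih1, ih2⟩ := ih
    refine ⟨by simpa using ih2, ?_⟩
    have key : ∑ j ∈ range (n + 2), (sseq t d (j + 1) : ℂ) * u (n + 2 - (j + 1))
        = (sseq t d (n + 2) : ℂ) * u 0 + t * ∑ j ∈ range (n + 1), (sseq t d (j + 1) : ℂ) * u (n + 1 - (j + 1))
          - d * ∑ j ∈ range n, (sseq t d (j + 1) : ℂ) * u (n - (j + 1)) := by
      rw [sum_range_succ, sum_range_succ, sum_range_succ _ n, mul_add, mul_sum, mul_sum]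
      have e1 : n + 2 - (n + 1 + 1) = 0 := by omega
      have e2 : n + 2 - (n + 1) = 1 := by omega
      have e3 : n + 1 - (n + 1) = 0 := by omega
      rw [e1, e2, e3, h1]
      have : ∑ x ∈ range n, (sseq t d (x + 1) : ℂ) * u (n + 2 - (x + 1)) =
          ∑ x ∈ range n, t * ((sseq t d (x + 1) : ℂ) * u (n + 1 - (x + 1))) - ∑ x ∈ range n, d * ((sseq t d (x + 1) : ℂ) * u (n - (x + 1))) := by
        rw [← sum_sub_distrib]
        refine sum_congr rfl fun x hx => ?_
        have := mem_range.1 hx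
        obtain ⟨m, rfl⟩ : ∃ m, n = m + (x + 1) := ⟨n - (x + 1), by omega⟩
        have a1 : m + (x + 1) + 2 - (x + 1) = m + 2 := by omega
        have a2 : m + (x + 1) + 1 - (x + 1) = m + 1 := by omega
        have a3 : m + (x + 1) - (x + 1) = m := by omega
        rw [a1, a2, a3, h2]; ring
      rw [this]; ring
    rw [key, ih1, ih2, (h3 n).1]
    show _ = (((n + 1 : ℕ) : ℂ) + 1) * u (n + 2)
    push_cast
    rw [h2 n]; ring

lemma sum_pp (n : ℕ) (hn : n ≠ 0) (F : ℕ → ℂ) (hF : ∀ d, ¬ IsPrimePow d → F d = 0) :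
    ∑ d ∈ n.divisors, F d = ∑ p ∈ n.primeFactors, ∑ j ∈ range (n.factorization p), F (p ^ (j + 1)) := by
  have h1 : ∑ d ∈ n.divisors, F d = ∑ d ∈ n.divisors with IsPrimePow d, F d := by
    rw [sum_filter]
    refine sum_congr rfl fun d _ => ?_
    split_ifs with h
    · rfl
    · exact hF d h
  rw [h1, sum_sigma']
  symm
  refine sum_bij (fun x _ => x.1 ^ (x.2 + 1)) ?_ ?_ ?_ ?_
  · rintro ⟨p, j⟩ h
    simp only [mem_sigma, mem_range, Nat.mem_primeFactors] at h
    obtain ⟨⟨hp, -, -⟩, hj⟩ := h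
    simp only [mem_filter, Nat.mem_divisors]
    exact ⟨⟨(hp.pow_dvd_iff_le_factorization hn).2 hj, hn⟩, hp.isPrimePow.pow (by omega)⟩
  · rintro ⟨p, j⟩ h ⟨q, k⟩ h' e
    simp only [mem_sigma, mem_range, Nat.mem_primeFactors] at h h'
    simp only at e
    have := Nat.Prime.pow_inj h.1.1 h'.1.1 e
    obtain ⟨rfl, rfl⟩ := this
    rfl
  · intro d hd
    simp only [mem_filter, Nat.mem_divisors] at hd
    obtain ⟨⟨hd, -⟩, p, k, hp, hk, rfl⟩ := hd
    have hp := hp.nat_prime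
    obtain ⟨j, rfl⟩ : ∃ j, k = j + 1 := ⟨k - 1, by omega⟩
    refine ⟨⟨p, j⟩, ?_, rfl⟩
    simp only [mem_sigma, mem_range, Nat.mem_primeFactors]
    exact ⟨⟨hp, (dvd_pow_self p (by omega)).trans hd, hn⟩, (hp.pow_dvd_iff_le_factorization hn).1 hd⟩
  · intros; rfl

noncomputable def tp (p : ℕ) : ℝ := if p % 4 = 1 then (ap p) ^ 2 / p - 2 else 0
noncomputable def dp (p : ℕ) : ℝ := if p % 4 = 1 then 1 else if p % 4 = 3 then -1 else 0

/-- the coefficients of the logarithmic derivative -/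
noncomputable def Lam (n : ℕ) : ℝ :=
  if IsPrimePow n then Real.log n.minFac * sseq (tp n.minFac) (dp n.minFac) (n.factorization n.minFac) else 0

lemma Lam_pow {p : ℕ} (hp : p.Prime) (k : ℕ) : Lam (p ^ (k + 1)) = Real.log p * sseq (tp p) (dp p) (k + 1) := by
  have : IsPrimePow (p ^ (k + 1)) := hp.isPrimePow.pow (by omega)
  rw [Lam, if_pos this, hp.pow_minFac (by omega)]
  simp [hp.factorization_self]

lemma Lam_prime {p : ℕ} (hp : p.Prime) : Lam p = Real.log p * tp p := by
  have := Lam_pow hp 0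
  simpa [sseq] using this

/-- formal log derivative identity -/
lemma conv_identity (c : ℕ → ℂ)
    (hc : ∀ p n : ℕ, p.Prime → n ≠ 0 → c (p * n) = tp p * c n - dp p * (if p ∣ n then c (n / p) else 0))
    (n : ℕ) (hn : n ≠ 0) :
    ∑ d ∈ n.divisors, (Lam d : ℂ) * c (n / d) = Real.log n * c n := by
  rw [sum_pp n hn (fun d => (Lam d : ℂ) * c (n / d)) (fun d hd => by simp [Lam, hd])]
  have h1 : (Real.log n : ℂ) = ∑ p ∈ n.primeFactors, ∑ j ∈ range (n.factorization p), (Real.log p : ℂ) := by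
    rw [← ArithmeticFunction.vonMangoldt_sum, Complex.ofReal_sum]
    rw [sum_pp n hn (fun d => ((ArithmeticFunction.vonMangoldt d : ℝ) : ℂ)) (fun d hd => by
      simp [ArithmeticFunction.vonMangoldt_apply, hd])]
    refine sum_congr rfl fun p hp => sum_congr rfl fun j _ => ?_
    rw [ArithmeticFunction.vonMangoldt_apply_pow (by omega), ArithmeticFunction.vonMangoldt_apply_prime (Nat.mem_primeFactors.1 hp).1]
  rw [h1, sum_mul]
  refine sum_congr rfl fun p hp => ?_
  have hp := (Nat.mem_primeFactors.1 hp).1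
  set e := n.factorization p with he
  obtain ⟨m, hm, hnm⟩ : ∃ m, ¬ p ∣ m ∧ n = p ^ e * m := by
    exact ⟨n / p ^ e, Nat.not_dvd_ordCompl hp hn, (Nat.ordProj_mul_ordCompl_eq_self n p).symm⟩
  have hm0 : m ≠ 0 := by rintro rfl; simp at hm
  have N := (newton (tp p) (dp p) (fun k => c (p ^ k * m)) ?_ ?_ e).1
  · have : ∀ j ∈ range e, ((Lam (p ^ (j + 1)) : ℝ) : ℂ) * c (n / p ^ (j + 1)) = (Real.log p : ℂ) * ((sseq (tp p) (dp p) (j + 1) : ℂ) * c (p ^ (e - (j + 1)) * m)) := by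
      intro j hj
      have hj := mem_range.1 hj
      rw [Lam_pow hp]
      have : n / p ^ (j + 1) = p ^ (e - (j + 1)) * m := by
        apply Nat.div_eq_of_eq_mul_right (pow_pos hp.pos _)
        rw [← mul_assoc, ← pow_add, hnm]; congr 2; omega
      rw [this]; push_cast; ring
    rw [sum_congr rfl this, ← mul_sum, N]
    simp [← hnm]; ring
  · have := hc p m hp hm0
    rw [if_neg hm] at this
    simp [this]
  · intro k
    have := hc p (p ^ (k + 1) * m) hp (mul_ne_zero (pow_ne_zero _ hp.ne_zero) hm0)
    rw [if_pos ((dvd_pow_self p (by omega)).mul_right _)] at this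
    have e1 : p ^ (k + 1) * m / p = p ^ k * m := by
      apply Nat.div_eq_of_eq_mul_right hp.pos; ring
    rw [e1] at this
    rw [← this]; congr 1; ring

lemma tp_one {p : ℕ} (hp : p.Prime) (h : p % 4 = 1) : |tp p| ≤ 2 := by
  obtain ⟨a, b, -, -, hab, hap⟩ := ap_one hp h
  rw [tp, if_pos h, hap]
  have hab' : (a:ℝ) ^ 2 + b ^ 2 = p := by exact_mod_cast hab
  have hp0 : (0:ℝ) < p := by exact_mod_cast hp.pos
  rw [abs_le]
  constructor
  · have : 0 ≤ 4 * (a:ℝ) ^ 2 / p := by positivity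
    linarith
  · have : 4 * (a:ℝ) ^ 2 / p ≤ 4 := by
      rw [div_le_iff₀ hp0]; nlinarith [sq_nonneg (b:ℝ)]
    linarith

lemma sseq_one (t : ℝ) (ht : |t| ≤ 2) (k : ℕ) : |sseq t 1 k| ≤ 2 := by
  have ht' := abs_le.1 ht
  have hc : Real.cos (Real.arccos (t / 2)) = t / 2 := Real.cos_arccos (by linarith) (by linarith)
  set θ := Real.arccos (t / 2)
  have : ∀ k : ℕ, sseq t 1 k = 2 * Real.cos (k * θ) ∧ sseq t 1 (k + 1) = 2 * Real.cos ((k + 1 : ℕ) * θ) := by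
    intro k
    induction k with
    | zero => simp [sseq, hc]; ring
    | succ n ih =>
      refine ⟨ih.2, ?_⟩
      show t * sseq t 1 (n + 1) - 1 * sseq t 1 n = _
      rw [ih.1, ih.2]
      have e1 : ((n + 1 + 1 : ℕ) : ℝ) * θ = ((n + 1 : ℕ) : ℝ) * θ + θ := by push_cast; ring
      have e2 : (n : ℝ) * θ = ((n + 1 : ℕ) : ℝ) * θ - θ := by push_cast; ring
      rw [e1, e2, Real.cos_add, Real.cos_sub, hc]; ring
  rw [(this k).1, abs_mul, abs_two]
  have := Real.abs_cos_le_one (k * θ)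
  linarith

lemma sseq_three (k : ℕ) : sseq 0 (-1) (2 * k) = 2 ∧ sseq 0 (-1) (2 * k + 1) = 0 := by
  induction k with
  | zero => simp [sseq]
  | succ n ih =>
    have e : 2 * (n + 1) = 2 * n + 2 := by ring
    rw [e]
    refine ⟨?_, ?_⟩
    · show 0 * _ - (-1) * sseq 0 (-1) (2 * n) = 2
      rw [ih.1]; ring
    · show 0 * _ - (-1) * sseq 0 (-1) (2 * n + 1) = 0
      rw [ih.2]; ring

lemma sseq_zero (k : ℕ) : sseq 0 0 (k + 1) = 0 := by
  cases k <;> simp [sseq]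

open ArithmeticFunction.vonMangoldt in
lemma Lam_bound (n : ℕ) : |Lam n| ≤ 2 * residueClass (1 : ZMod 4) n := by
  have hR := residueClass_nonneg (1 : ZMod 4) n
  by_cases hn : IsPrimePow n
  swap
  · rw [Lam, if_neg hn]; simpa using hR
  obtain ⟨p, k, hp, hk, rfl⟩ := hn
  have hp := hp.nat_prime
  obtain ⟨j, rfl⟩ : ∃ j, k = j + 1 := ⟨k - 1, by omega⟩
  rw [Lam_pow hp]
  have hlog : 0 ≤ Real.log p := Real.log_natCast_nonneg p
  have hR1 : ((p ^ (j + 1) : ℕ) : ZMod 4) = 1 → residueClass (1 : ZMod 4) (p ^ (j + 1)) = Real.log p := by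
    intro h
    rw [residueClass, Set.indicator_of_mem (by exact h), ArithmeticFunction.vonMangoldt_apply_pow (by omega),
      ArithmeticFunction.vonMangoldt_apply_prime hp]
  have hcast : (p : ZMod 4) = ((p % 4 : ℕ) : ZMod 4) := by simp
  have : p % 4 < 4 := Nat.mod_lt _ (by norm_num)
  by_cases h1 : p % 4 = 1
  · rw [hR1 (by push_cast; rw [hcast, h1]; simp), abs_mul, abs_of_nonneg hlog, dp, if_pos h1]
    have := sseq_one (tp p) (tp_one hp h1) (j + 1)
    nlinarith
  have ht : tp p = 0 := by rw [tp, if_neg h1]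
  by_cases h3 : p % 4 = 3
  · rw [ht, dp, if_neg h1, if_pos h3]
    rcases Nat.even_or_odd' (j + 1) with ⟨m, h | h⟩
    · rw [hR1 ?_, h, (sseq_three m).1, abs_mul, abs_of_nonneg hlog, abs_two]
      · linarith
      · push_cast; rw [hcast, h3, h, pow_mul]
        have : (((3 : ℕ) : ZMod 4)) ^ 2 = 1 := by decide
        rw [this, one_pow]
    · rw [h, (sseq_three m).2, mul_zero, abs_zero, ← h]; linarith
  · rw [ht, dp, if_neg h1, if_neg h3, sseq_zero, mul_zero, abs_zero]
    linarith

end CM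
end

section
open Finset
namespace CM

open Zsqrtd

def eps (α : GaussianInt) : ℤ :=
  if α.re % 2 = 1 ∧ α.im % 2 = 0 then 1 else if α.re % 2 = 0 ∧ α.im % 2 = 1 then -1 else 0

lemma eps_mul (α β : GaussianInt) : eps (α * β) = eps α * eps β := by
  obtain ⟨a, b⟩ := α
  obtain ⟨c, d⟩ := β
  have h1 : ((⟨a, b⟩ : GaussianInt) * ⟨c, d⟩).re = a * c - b * d := by simp [Zsqrtd.re_mul]; ring
  have h2 : ((⟨a, b⟩ : GaussianInt) * ⟨c, d⟩).im = a * d + b * c := by simp [Zsqrtd.im_mul]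
  simp only [eps, h1, h2]
  rcases Int.emod_two_eq a with ha | ha <;> rcases Int.emod_two_eq b with hb | hb <;>
  rcases Int.emod_two_eq c with hc | hc <;> rcases Int.emod_two_eq d with hd | hd <;>
  simp [Int.sub_emod, Int.add_emod, Int.mul_emod, ha, hb, hc, hd]

noncomputable def chi (α : GaussianInt) : ℂ := eps α * (α : ℂ) ^ 2 / (α.norm : ℂ)

lemma chi_mul (α β : GaussianInt) : chi (α * β) = chi α * chi β := by
  simp only [chi, eps_mul, Zsqrtd.norm_mul]
  rw [GaussianInt.toComplex_mul]
  push_cast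
  rw [mul_pow, div_mul_div_comm]
  congr 1
  ring

noncomputable def fib (n : ℕ) : Finset GaussianInt :=
  ((Icc (-(n:ℤ)) n ×ˢ Icc (-(n:ℤ)) n).image (fun x => (⟨x.1, x.2⟩ : GaussianInt))).filter (fun α => α.norm = n)

lemma norm_eq (α : GaussianInt) : α.norm = α.re ^ 2 + α.im ^ 2 := by
  rw [Zsqrtd.norm_def]; ring

lemma mem_fib {n : ℕ} {α : GaussianInt} : α ∈ fib n ↔ α.norm = n := by
  simp only [fib, mem_filter, mem_image, mem_product, mem_Icc, and_iff_right_iff_imp]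
  intro h
  refine ⟨(α.re, α.im), ?_, rfl⟩
  rw [norm_eq] at h
  have h1 : |α.re| ≤ α.re ^ 2 := by rw [← sq_abs]; exact Int.le_self_sq _
  have h2 : |α.im| ≤ α.im ^ 2 := by rw [← sq_abs]; exact Int.le_self_sq _
  have h3 := sq_nonneg α.re
  have h4 := sq_nonneg α.im
  constructor
  · rw [← abs_le]; simp only; linarith
  · rw [← abs_le]; simp only; linarith

noncomputable def w (n : ℕ) : ℂ := ∑ α ∈ fib n, chi α

lemma fib_one : fib 1 = {(⟨1, 0⟩ : GaussianInt), ⟨-1, 0⟩, ⟨0, 1⟩, ⟨0, -1⟩} := by decide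

lemma w_one : w 1 = 4 := by
  rw [w, fib_one, sum_insert (by decide), sum_insert (by decide), sum_insert (by decide), sum_singleton]
  simp [chi, eps, GaussianInt.toComplex_def, Zsqrtd.norm_def]
  norm_num

lemma chi_natCast (p : ℕ) (hp : p % 2 = 1) : chi (p : GaussianInt) = 1 := by
  have hp0 : (p : ℂ) ≠ 0 := by
    have : p ≠ 0 := by omega
    exact_mod_cast this
  have h : eps (p : GaussianInt) = 1 := by
    have : (p : ℤ) % 2 = 1 := by exact_mod_cast hp
    simp [eps, this]
  rw [chi, h]
  simp
  field_simp

lemma sum_mulLeft (π : GaussianInt) (hπ : π ≠ 0) (s : Finset GaussianInt) :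
    ∑ α ∈ s.image (fun β => π * β), chi α = chi π * ∑ β ∈ s, chi β := by
  rw [sum_image (fun a _ b _ h => mul_left_cancel₀ hπ h), mul_sum]
  exact sum_congr rfl fun _ _ => chi_mul _ _

lemma hecke_two (n : ℕ) : w (2 * n) = 0 := by
  refine sum_eq_zero fun α hα => ?_
  rw [mem_fib, norm_eq] at hα
  have : eps α = 0 := by
    have h2 : (α.re ^ 2 + α.im ^ 2) % 2 = 0 := by rw [hα]; push_cast; omega
    unfold eps
    rcases Int.emod_two_eq α.re with ha | ha <;> rcases Int.emod_two_eq α.im with hb | hb <;>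
      simp [Int.add_emod, pow_two, Int.mul_emod, ha, hb] at h2 ⊢
  simp [chi, this]

lemma norm_star_mul (α : GaussianInt) : (α.norm : GaussianInt) = α * star α := by
  rw [Zsqrtd.norm_eq_mul_conj]

lemma star_dvd {α β : GaussianInt} (h : α ∣ star β) : star α ∣ β := by
  obtain ⟨γ, hγ⟩ := h
  refine ⟨star γ, ?_⟩
  rw [← star_star β, hγ, star_mul, mul_comm]

lemma image_p (p n : ℕ) (hp : p ≠ 0) (s : Finset GaussianInt) (hs : ∀ α, α ∈ s ↔ α.norm = (p * n : ℕ) ∧ (p : GaussianInt) ∣ α) :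
    ∑ α ∈ s, chi α = chi p * (if p ∣ n then w (n / p) else 0) := by
  split_ifs with h
  · obtain ⟨m, rfl⟩ := h
    rw [Nat.mul_div_cancel_left m (Nat.pos_of_ne_zero hp), w, ← sum_mulLeft _ (by exact_mod_cast hp)]
    congr 1
    ext α
    rw [hs, mem_image]
    have hp0 : (p:ℤ) ≠ 0 := by exact_mod_cast hp
    constructor
    · rintro ⟨h1, β, rfl⟩
      refine ⟨β, ?_, rfl⟩
      rw [mem_fib]
      rw [Zsqrtd.norm_mul, Zsqrtd.norm_natCast] at h1
      push_cast at h1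
      apply mul_left_cancel₀ (mul_ne_zero hp0 hp0)
      linarith
    · rintro ⟨β, h1, rfl⟩
      rw [mem_fib] at h1
      refine ⟨?_, dvd_mul_right _ _⟩
      rw [Zsqrtd.norm_mul, Zsqrtd.norm_natCast, h1]; push_cast; ring
  · rw [mul_zero]
    refine sum_eq_zero fun α hα => ?_
    exfalso
    obtain ⟨h1, β, rfl⟩ := (hs α).1 hα
    apply h
    rw [Zsqrtd.norm_mul, Zsqrtd.norm_natCast] at h1
    have hp0 : (p:ℤ) ≠ 0 := by exact_mod_cast hp
    push_cast at h1
    have : (n:ℤ) = p * β.norm := by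
      apply mul_left_cancel₀ hp0; linarith
    exact Int.natCast_dvd_natCast.1 (Dvd.intro _ this.symm)

lemma hecke_three {p : ℕ} (hp : p.Prime) (h3 : p % 4 = 3) (n : ℕ) :
    w (p * n) = if p ∣ n then w (n / p) else 0 := by
  have := Fact.mk hp
  have hP := GaussianInt.prime_of_nat_prime_of_mod_four_eq_three p h3
  rw [w, image_p p n hp.ne_zero, chi_natCast p (by omega), one_mul]
  intro α
  rw [mem_fib, iff_self_and]
  intro h
  have : (p : GaussianInt) ∣ α * star α := by
    rw [← norm_star_mul, h]; push_cast; exact dvd_mul_right _ _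
  rcases hP.dvd_or_dvd this with h | h
  · exact h
  · have := star_dvd h
    simpa using this

lemma prime_of_norm {π : GaussianInt} {p : ℕ} (hp : p.Prime) (h : π.norm = p) : Prime π := by
  rw [← irreducible_iff_prime]
  refine ⟨?_, ?_⟩
  · intro hu
    rw [← Zsqrtd.norm_eq_one_iff, h] at hu
    simp at hu
    exact hp.one_lt.ne' hu
  · intro a b hab
    rw [← Zsqrtd.norm_eq_one_iff, ← Zsqrtd.norm_eq_one_iff]
    have : a.norm.natAbs * b.norm.natAbs = p := by
      rw [← Int.natAbs_mul, ← Zsqrtd.norm_mul, ← hab, h]; simp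
    have h2 := Nat.prime_mul_iff.1 (this ▸ hp)
    tauto

lemma hecke_one {p : ℕ} (hp : p.Prime) (h1 : p % 4 = 1) (n : ℕ) :
    w (p * n) = tp p * w n - if p ∣ n then w (n / p) else 0 := by
  obtain ⟨a, b, ha, hb, hab, hap⟩ := ap_one hp h1
  set π : GaussianInt := ⟨a, b⟩ with hπ
  have hN : π.norm = p := by rw [norm_eq]; exact hab
  have hN' : (star π).norm = p := by rw [Zsqrtd.norm_conj, hN]
  have hP := prime_of_norm hp hN
  have hP' := prime_of_norm hp hN'
  have hpp : (p : GaussianInt) = π * star π := by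
    rw [← norm_star_mul, hN]; simp
  have hp0 : (p : ℝ) ≠ 0 := by exact_mod_cast hp.ne_zero
  have hp0' : (p : ℤ) ≠ 0 := by exact_mod_cast hp.ne_zero
  have hchi : chi π + chi (star π) = tp p := by
    have e1 : eps π = 1 := by simp [eps, hπ, ha, hb]
    have e2 : eps (star π) = 1 := by
      have : (-b) % 2 = 0 := by omega
      simp [eps, hπ, ha, this]
    rw [chi, chi, e1, e2, hN, hN', GaussianInt.toComplex_star, tp, if_pos h1, hap]
    have hp0' : (p : ℂ) ≠ 0 := by exact_mod_cast hp.ne_zero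
    have hab' : (a:ℂ) ^ 2 + b ^ 2 = p := by exact_mod_cast hab
    rw [GaussianInt.toComplex_def]
    push_cast
    simp [hπ]
    field_simp
    have hI := Complex.I_sq
    linear_combination 2 * (b:ℂ) ^ 2 * hI - 2 * hab'
  have hnd : ¬ star π ∣ π := by
    intro h
    have h2 : star π ∣ ((2 * a : ℤ) : GaussianInt) := by
      have e : ((2 * a : ℤ) : GaussianInt) = π + star π := by
        ext
        · simp [hπ]; ring
        · simp [hπ]
      rw [e]; exact dvd_add h dvd_rfl
    obtain ⟨γ, hγ⟩ := h2
    have h3 := congrArg Zsqrtd.norm hγ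
    rw [Zsqrtd.norm_intCast, Zsqrtd.norm_mul, hN'] at h3
    have h4 : (p:ℤ) ∣ (2 * a) * (2 * a) := ⟨_, h3⟩
    have hpi : Prime (p:ℤ) := Nat.prime_iff_prime_int.1 hp
    have h5 : (p:ℤ) ∣ 2 * a := by rcases hpi.dvd_or_dvd h4 with h | h <;> exact h
    have h6 : (p:ℤ) ∣ a := by
      rcases hpi.dvd_or_dvd h5 with h | h
      · exfalso
        have := Int.le_of_dvd (by norm_num) h
        have := hp.two_le
        have : p = 2 := by omega
        omega
      · exact h
    have ha0 : a ≠ 0 := by rintro rfl; simp at ha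
    obtain ⟨k, rfl⟩ := h6
    have hk : k ≠ 0 := by rintro rfl; simp at ha0
    have hk1 : 1 ≤ k ^ 2 := by have := sq_nonneg k; have := pow_ne_zero 2 hk; omega
    have : (2:ℤ) ≤ p := by exact_mod_cast hp.two_le
    have h7 : (p:ℤ) ^ 2 ≤ (p * k) ^ 2 := by rw [mul_pow]; nlinarith [sq_nonneg (p:ℤ)]
    nlinarith [sq_nonneg b]
  have himg : ∀ ρ : GaussianInt, ρ.norm = p → ∀ α, α ∈ (fib n).image (fun β => ρ * β) ↔ α.norm = (p * n : ℕ) ∧ ρ ∣ α := by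
    intro ρ hρ α
    rw [mem_image]
    constructor
    · rintro ⟨β, hβ, rfl⟩
      rw [mem_fib] at hβ
      refine ⟨?_, dvd_mul_right _ _⟩
      rw [Zsqrtd.norm_mul, hρ, hβ]; push_cast; ring
    · rintro ⟨h, β, rfl⟩
      refine ⟨β, ?_, rfl⟩
      rw [Zsqrtd.norm_mul, hρ] at h
      rw [mem_fib]
      apply mul_left_cancel₀ hp0'
      rw [h]; push_cast; ring
  have hU : fib (p * n) = (fib n).image (fun β => π * β) ∪ (fib n).image (fun β => star π * β) := by
    ext α
    rw [mem_union, himg _ hN, himg _ hN', ← and_or_left, mem_fib, iff_self_and]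
    intro h
    have : π ∣ α * star α := by
      rw [← norm_star_mul, h]; push_cast; rw [hpp, mul_assoc]; exact dvd_mul_right _ _
    rcases hP.dvd_or_dvd this with h | h
    · exact Or.inl h
    · exact Or.inr (star_dvd h)
  have hI := sum_union_inter (s₁ := (fib n).image (fun β => π * β)) (s₂ := (fib n).image (fun β => star π * β)) (f := chi)
  rw [← hU, sum_mulLeft _ hP.ne_zero, sum_mulLeft _ hP'.ne_zero, image_p p n hp.ne_zero (_ ∩ _), chi_natCast p (by omega), one_mul] at hI
  · rw [← hchi, add_mul]
    rw [w, eq_sub_iff_add_eq, hI]; rfl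
  · intro α
    rw [mem_inter, himg _ hN, himg _ hN', ← and_and_left]
    refine and_congr_right fun _ => ?_
    constructor
    · rintro ⟨⟨β, rfl⟩, h⟩
      rcases hP'.dvd_or_dvd h with h | h
      · exact absurd h hnd
      · rw [hpp]; exact mul_dvd_mul_left _ h
    · intro h
      rw [hpp] at h
      exact ⟨(dvd_mul_right _ _).trans h, (dvd_mul_left _ _).trans h⟩

noncomputable def cc (n : ℕ) : ℂ := w n / 4

lemma cc_one : cc 1 = 1 := by rw [cc, w_one]; norm_num

lemma hecke (p n : ℕ) (hp : p.Prime) :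
    cc (p * n) = tp p * cc n - dp p * (if p ∣ n then cc (n / p) else 0) := by
  have : p % 4 < 4 := Nat.mod_lt _ (by norm_num)
  unfold cc
  by_cases h1 : p % 4 = 1
  · rw [hecke_one hp h1, dp, if_pos h1]; split_ifs <;> push_cast <;> ring
  by_cases h3 : p % 4 = 3
  · rw [hecke_three hp h3, dp, tp, if_neg h1, if_neg h1, if_pos h3]; split_ifs <;> push_cast <;> ring
  have : p = 2 := by
    rcases hp.eq_two_or_odd with h | h
    · exact h
    · omega
  subst this
  rw [hecke_two, dp, tp]; simp

lemma cc_conv (n : ℕ) (hn : n ≠ 0) :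
    ∑ d ∈ n.divisors, (Lam d : ℂ) * cc (n / d) = Real.log n * cc n :=
  conv_identity cc (fun p n hp _ => hecke p n hp) n hn

end CM
end

section
open Complex Filter
namespace CM

noncomputable def H (s : ℂ) (x y : ℝ) : ℂ := (x + y * I) ^ 2 * ((x ^ 2 + y ^ 2 : ℝ) : ℂ) ^ (-1 - s)

noncomputable def T (v : ℤ × ℤ) (s : ℂ) : ℂ :=
  H s (2 * v.1 + 1) (2 * v.2) - H s (2 * v.1 + 2) (2 * v.2 + 1)

noncomputable def W (s : ℂ) : ℂ := ∑' v : ℤ × ℤ, T v s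

lemma summable_Z2 {k : ℝ} (hk : 2 < k) : Summable fun v : ℤ × ℤ => ‖v‖ ^ (-k) := by
  have h := EisensteinSeries.summable_one_div_norm_rpow hk
  rw [← (finTwoArrowEquiv _).symm.summable_iff] at h
  refine h.congr fun v => ?_
  simp only [Function.comp_apply, finTwoArrowEquiv_symm_apply]
  congr 1
  simp [Prod.norm_def, Pi.norm_def, Finset.univ_fin2 ]

lemma summable_Z2' {k : ℝ} (hk : 2 < k) : Summable fun v : ℤ × ℤ => (1 + ‖v‖) ^ (-k) := by
  refine (summable_Z2 hk).of_norm_bounded_eventually ?_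
  have : {(0 : ℤ × ℤ)}ᶜ ∈ (cofinite : Filter (ℤ × ℤ)) := (Set.finite_singleton _).compl_mem_cofinite
  filter_upwards [this] with v hv
  have hv : 0 < ‖v‖ := norm_pos_iff.2 hv
  rw [Real.norm_of_nonneg (by positivity)]
  exact Real.rpow_le_rpow_of_nonpos hv (by linarith) (by linarith)

lemma norm_xy (x y : ℝ) : ‖(x + y * I : ℂ)‖ = √(x ^ 2 + y ^ 2) := by
  rw [Complex.norm_add_mul_I]

lemma N_lower (a b : ℤ) (τ : ℝ) (h0 : 0 ≤ τ) (h1 : τ ≤ 1) :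
    (1 + ‖((a, b) : ℤ × ℤ)‖) ^ 2 / 18 ≤ (2 * a + 1 + τ) ^ 2 + (2 * b + τ) ^ 2 := by
  set x := 2 * (a:ℝ) + 1 + τ
  set y := 2 * (b:ℝ) + τ
  have hxy : 1 ≤ |x - y| := by
    have : x - y = ((2 * (a - b) + 1 : ℤ) : ℝ) := by simp [x, y]; ring
    rw [this, ← Int.cast_abs]
    have : 1 ≤ |2 * (a - b) + 1| := Int.one_le_abs (by omega)
    exact_mod_cast this
  have h2 : 1 ≤ (x - y) ^ 2 := by rw [← sq_abs]; nlinarith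
  have h3 : 1 / 2 ≤ x ^ 2 + y ^ 2 := by nlinarith [sq_nonneg (x + y)]
  have key : ∀ m : ℝ, (m = |(a:ℝ)| ∨ m = |(b:ℝ)|) → (1 + m) ^ 2 / 18 ≤ x ^ 2 + y ^ 2 := by
    intro m hm
    by_cases hm2 : m ≤ 2
    · have : 0 ≤ m := by rcases hm with rfl | rfl <;> positivity
      nlinarith
    push Not at hm2
    have hm3 : 3 ≤ m := by
      rcases hm with rfl | rfl
      · have : (2:ℤ) < |a| := by exact_mod_cast hm2
        exact_mod_cast this
      · have : (2:ℤ) < |b| := by exact_mod_cast hm2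
        exact_mod_cast this
    have : (1 + m) ^ 2 ≤ x ^ 2 + y ^ 2 := by
      rcases hm with rfl | rfl
      · have : 1 + |(a:ℝ)| ≤ |x| := by
          rcases abs_cases (a:ℝ) with ⟨h, h'⟩ | ⟨h, h'⟩
          · rw [h]; refine le_trans ?_ (le_abs_self _); rw [h] at hm3; simp only [x]; linarith
          · rw [h]; refine le_trans ?_ (neg_le_abs _); rw [h] at hm3; simp only [x]; linarith
        have h5 : (1 + |(a:ℝ)|) ^ 2 ≤ |x| ^ 2 := by gcongr
        rw [sq_abs] at h5; nlinarith [sq_nonneg y]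
      · have : 1 + |(b:ℝ)| ≤ |y| := by
          rcases abs_cases (b:ℝ) with ⟨h, h'⟩ | ⟨h, h'⟩
          · rw [h]; refine le_trans ?_ (le_abs_self _); rw [h] at hm3; simp only [y]; linarith
          · rw [h]; refine le_trans ?_ (neg_le_abs _); rw [h] at hm3; simp only [y]; linarith
        have h5 : (1 + |(b:ℝ)|) ^ 2 ≤ |y| ^ 2 := by gcongr
        rw [sq_abs] at h5; nlinarith [sq_nonneg x]
    nlinarith [sq_nonneg (1 + m)]
  apply key
  rw [Prod.norm_def]
  simp only [Int.norm_eq_abs]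
  exact max_choice _ _

lemma H_deriv (s : ℂ) (x y τ : ℝ) (h : 0 < (x + τ) ^ 2 + (y + τ) ^ 2) :
    HasDerivAt (fun τ : ℝ => H s (x + τ) (y + τ))
      (2 * ((x + τ : ℝ) + (y + τ : ℝ) * I) * (1 + I) * (((x + τ) ^ 2 + (y + τ) ^ 2 : ℝ) : ℂ) ^ (-1 - s)
        + ((x + τ : ℝ) + (y + τ : ℝ) * I) ^ 2 * ((-1 - s) * (((x + τ) ^ 2 + (y + τ) ^ 2 : ℝ) : ℂ) ^ (-1 - s - 1) * ((2 * (x + τ) + 2 * (y + τ) : ℝ) : ℂ))) τ := by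
  have hx : HasDerivAt (fun τ : ℝ => x + τ) 1 τ := (hasDerivAt_id τ).const_add x
  have hy : HasDerivAt (fun τ : ℝ => y + τ) 1 τ := (hasDerivAt_id τ).const_add y
  have h1 : HasDerivAt (fun τ : ℝ => ((x + τ : ℝ) : ℂ) + ((y + τ : ℝ) : ℂ) * I) (1 + 1 * I) τ := by
    exact (hx.ofReal_comp.add (hy.ofReal_comp.mul_const I)).congr_deriv (by simp)
  have h2 : HasDerivAt (fun τ : ℝ => (((x + τ) ^ 2 + (y + τ) ^ 2 : ℝ) : ℂ)) ((2 * (x + τ) + 2 * (y + τ) : ℝ) : ℂ) τ := by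
    have := ((hx.pow 2).add (hy.pow 2)).ofReal_comp
    simpa using this
  have h3 : HasDerivAt (fun τ : ℝ => (((x + τ) ^ 2 + (y + τ) ^ 2 : ℝ) : ℂ) ^ (-1 - s)) ((-1 - s) * (((x + τ) ^ 2 + (y + τ) ^ 2 : ℝ) : ℂ) ^ (-1 - s - 1) * ((2 * (x + τ) + 2 * (y + τ) : ℝ) : ℂ)) τ := by
    have hs : (((x + τ) ^ 2 + (y + τ) ^ 2 : ℝ) : ℂ) ∈ slitPlane := ofReal_mem_slitPlane.2 h
    exact (Complex.hasStrictDerivAt_cpow_const hs).hasDerivAt.comp τ h2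
  have h4 := (h1.pow 2).mul h3
  refine h4.congr_deriv ?_
  simp

lemma T_bound (v : ℤ × ℤ) (s : ℂ) (σ R : ℝ) (hσ : 1 / 2 < σ) (h1 : σ ≤ s.re) (h2 : ‖s‖ ≤ R) :
    ‖T v s‖ ≤ (3 * (2 + R) * 2 * 18 ^ (1 / 2 + R)) * (1 + ‖v‖) ^ (-(1 + 2 * σ)) := by
  obtain ⟨a, b⟩ := v
  have hre : s.re ≤ R := (re_le_norm s).trans h2
  have hR : 0 ≤ R := (norm_nonneg s).trans h2
  set m := ‖((a, b) : ℤ × ℤ)‖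
  have hm : 0 ≤ m := norm_nonneg _
  have hNl := fun τ h0 h1 => N_lower a b τ h0 h1
  have hNpos : ∀ τ : ℝ, 0 ≤ τ → τ ≤ 1 → 0 < (2 * (a:ℝ) + 1 + τ) ^ 2 + (2 * b + τ) ^ 2 := fun τ h0 h1 =>
    lt_of_lt_of_le (by positivity) (hNl τ h0 h1)
  have hder := fun τ h0 h1 => H_deriv s (2 * a + 1) (2 * b) τ (hNpos τ h0 h1)
  have e0 : T (a, b) s = -(H s (2 * a + 1 + 1) (2 * b + 1) - H s (2 * a + 1 + 0) (2 * b + 0)) := by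
    simp only [T]
    rw [add_zero, add_zero]
    have : (2 * (a:ℝ) + 1 + 1) = 2 * a + 2 := by ring
    rw [this]; ring
  rw [e0, norm_neg]
  refine norm_image_sub_le_of_norm_deriv_le_segment_01' (f := fun τ : ℝ => H s (2 * a + 1 + τ) (2 * b + τ))
    (fun τ hτ => (hder τ hτ.1 hτ.2).hasDerivWithinAt) ?_
  intro τ hτ
  have hN := hNpos τ hτ.1 hτ.2.le
  have hNl := hNl τ hτ.1 hτ.2.le
  set x := 2 * (a:ℝ) + 1 + τ
  set y := 2 * (b:ℝ) + τ
  set N := x ^ 2 + y ^ 2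
  have hz := norm_xy x y
  have hI : ‖(1 + I : ℂ)‖ ≤ 2 := by
    refine (norm_add_le _ _).trans ?_
    simp; norm_num
  have hsN : √N * N ^ (-1 - s.re) = N ^ (-(1 / 2 + s.re)) := by
    rw [Real.sqrt_eq_rpow, ← Real.rpow_add hN]; congr 1; ring
  have hxyN : |2 * x + 2 * y| ≤ 4 * √N := by
    have e1 : |x| ≤ √N := Real.abs_le_sqrt (by simp only [N]; nlinarith [sq_nonneg y])
    have e2 : |y| ≤ √N := Real.abs_le_sqrt (by simp only [N]; nlinarith [sq_nonneg x])
    have := abs_add_le (2 * x) (2 * y)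
    rw [abs_mul, abs_mul, abs_two] at this
    linarith
  have hs1 : ‖(-1 - s : ℂ)‖ ≤ 1 + R := by
    refine (norm_sub_le _ _).trans ?_
    simp; linarith
  have hb : N ^ (-(1 / 2 + s.re)) ≤ 18 ^ (1 / 2 + R) * (1 + m) ^ (-(1 + 2 * σ)) := by
    calc N ^ (-(1 / 2 + s.re)) ≤ ((1 + m) ^ 2 / 18) ^ (-(1 / 2 + s.re)) := by
          apply Real.rpow_le_rpow_of_nonpos (by positivity) hNl (by linarith)
      _ = 18 ^ (1 / 2 + s.re) * (1 + m) ^ (-(1 + 2 * s.re)) := by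
          rw [Real.div_rpow (by positivity) (by positivity), ← Real.rpow_natCast, ← Real.rpow_mul (by positivity),
            Real.rpow_neg (by norm_num : (0:ℝ) ≤ 18), div_inv_eq_mul, mul_comm]
          congr 2; push_cast; ring
      _ ≤ _ := by
          gcongr
          · norm_num
          · linarith
  refine (norm_add_le _ _).trans ?_
  rw [norm_mul, norm_mul, norm_mul, norm_mul, norm_mul, norm_mul, norm_pow, hz, norm_cpow_eq_rpow_re_of_pos hN,
    norm_cpow_eq_rpow_re_of_pos hN, Complex.norm_real, Real.norm_eq_abs]
  have e3 : (-1 - s).re = -1 - s.re := by simp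
  have e4 : (-1 - s - 1).re = -1 - s.re - 1 := by simp
  rw [e3, e4]
  have e5 : √N ^ 2 * (N ^ (-1 - s.re - 1)) = N ^ (-1 - s.re) := by
    rw [Real.sq_sqrt hN.le, Real.rpow_sub_one hN.ne']; field_simp
  have hp : 0 ≤ N ^ (-1 - s.re) := by positivity
  have hq : 0 ≤ √N := Real.sqrt_nonneg _
  have t1 : ‖(2:ℂ)‖ * √N * ‖(1 + I : ℂ)‖ * N ^ (-1 - s.re) ≤ 4 * N ^ (-(1 / 2 + s.re)) := by
    rw [← hsN]
    simp only [Complex.norm_ofNat]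
    have : 0 ≤ √N * N ^ (-1 - s.re) := by positivity
    nlinarith
  have t2 : √N ^ 2 * (‖(-1 - s : ℂ)‖ * N ^ (-1 - s.re - 1) * |2 * x + 2 * y|) ≤ (1 + R) * 4 * N ^ (-(1 / 2 + s.re)) := by
    calc _ = N ^ (-1 - s.re) * (‖(-1 - s : ℂ)‖ * |2 * x + 2 * y|) := by rw [← e5]; ring
      _ ≤ N ^ (-1 - s.re) * ((1 + R) * (4 * √N)) := by gcongr
      _ = _ := by rw [← hsN]; ring
  have hpos : 0 ≤ N ^ (-(1 / 2 + s.re)) := by positivity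
  calc _ ≤ 4 * N ^ (-(1 / 2 + s.re)) + (1 + R) * 4 * N ^ (-(1 / 2 + s.re)) := add_le_add t1 t2
    _ ≤ (3 * (2 + R) * 2) * N ^ (-(1 / 2 + s.re)) := by nlinarith
    _ ≤ (3 * (2 + R) * 2) * (18 ^ (1 / 2 + R) * (1 + m) ^ (-(1 + 2 * σ))) := by gcongr
    _ = _ := by ring

lemma H_diff (x y : ℝ) (h : 0 < x ^ 2 + y ^ 2) : Differentiable ℂ (fun s => H s x y) := by
  unfold H
  have h0 : ((x ^ 2 + y ^ 2 : ℝ) : ℂ) ≠ 0 := by exact_mod_cast h.ne'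
  intro s
  refine (differentiableAt_const _).mul ?_
  exact ((differentiableAt_const _).sub differentiableAt_id).const_cpow (Or.inl h0)

lemma T_diff (v : ℤ × ℤ) : Differentiable ℂ (T v) := by
  obtain ⟨a, b⟩ := v
  have hp : 0 < (1 + ‖((a, b) : ℤ × ℤ)‖) ^ 2 / 18 := by positivity
  have h1 := hp.trans_le (N_lower a b 0 le_rfl zero_le_one)
  have h2 := hp.trans_le (N_lower a b 1 zero_le_one le_rfl)
  have e : 2 * (a:ℝ) + 1 + 1 = 2 * a + 2 := by ring
  rw [add_zero, add_zero] at h1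
  rw [e] at h2
  exact (H_diff _ _ h1).sub (H_diff _ _ h2)

lemma T_summable (s : ℂ) (hs : 1 / 2 < s.re) : Summable (fun v => T v s) := by
  refine Summable.of_norm_bounded ((summable_Z2' (k := 1 + 2 * s.re) (by linarith)).mul_left _) fun v => T_bound v s s.re ‖s‖ hs le_rfl le_rfl

theorem W_diff : DifferentiableOn ℂ W {s | 1 / 2 < s.re} := by
  intro s hs
  have hs : 1 / 2 < s.re := hs
  obtain ⟨σ, h1, h2⟩ := exists_between hs
  set U : Set ℂ := {z | σ < z.re} ∩ Metric.ball 0 (‖s‖ + 1)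
  have hU : IsOpen U := (isOpen_lt continuous_const continuous_re).inter Metric.isOpen_ball
  have hsU : s ∈ U := ⟨h2, by simp⟩
  have := differentiableOn_tsum_of_summable_norm (F := T) (U := U) ((summable_Z2' (k := 1 + 2 * σ) (by linarith)).mul_left _)
    (fun v => (T_diff v).differentiableOn) hU (fun v z hz => T_bound v z σ (‖s‖ + 1) h1 hz.1.le (by simpa using hz.2.out.le))
  exact (this.differentiableAt (hU.mem_nhds hsU)).differentiableWithinAt

end CM
end

section
open Complex Filter
namespace CM

noncomputable def gg (s : ℂ) (α : GaussianInt) : ℂ := chi α * (α.norm : ℂ) ^ (-s)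

def eqv : ℤ × ℤ ≃ GaussianInt := ⟨fun v => ⟨v.1, v.2⟩, fun α => (α.re, α.im), fun _ => rfl, fun _ => rfl⟩

lemma eps_le (α : GaussianInt) : ‖(eps α : ℂ)‖ ≤ 1 := by
  unfold eps
  split_ifs <;> simp

lemma norm_toComplex_sq (α : GaussianInt) : ‖(α : ℂ)‖ ^ 2 = (α.norm : ℝ) := by
  rw [GaussianInt.intCast_real_norm, Complex.normSq_eq_norm_sq]

lemma chi_le (α : GaussianInt) : ‖chi α‖ ≤ 1 := by
  rw [chi, norm_div, norm_mul, norm_pow, norm_toComplex_sq]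
  have h0 : (0:ℝ) ≤ α.norm := by exact_mod_cast GaussianInt.norm_nonneg α
  have : ‖(α.norm : ℂ)‖ = α.norm := by
    rw [← Complex.ofReal_intCast, Complex.norm_real, Real.norm_of_nonneg h0]
  rw [this]
  refine div_le_one_of_le₀ ?_ h0
  have := eps_le α
  nlinarith

lemma chi_zero : chi 0 = 0 := by simp [chi, eps]

lemma gg_summable (s : ℂ) (hs : 1 < s.re) : Summable (gg s) := by
  rw [← eqv.summable_iff]
  refine Summable.of_norm_bounded (summable_Z2 (k := 2 * s.re) (by linarith)) fun v => ?_
  by_cases hv : v = 0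
  · subst hv
    have : gg s (eqv 0) = 0 := by
      have : eqv 0 = 0 := rfl
      rw [this, gg, chi_zero, zero_mul]
    rw [Function.comp_apply, this, norm_zero]; positivity
  have hpos : 0 < ‖v‖ := norm_pos_iff.2 hv
  have hN : ‖v‖ ^ 2 ≤ ((eqv v).norm : ℝ) := by
    rw [norm_eq]
    have : ‖v‖ = |(v.1:ℝ)| ∨ ‖v‖ = |(v.2:ℝ)| := by
      rw [Prod.norm_def]; simp only [Int.norm_eq_abs]; exact max_choice _ _
    push_cast
    have e1 : ((eqv v).re : ℝ) = v.1 := rfl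
    have e2 : ((eqv v).im : ℝ) = v.2 := rfl
    rw [e1, e2]
    rcases this with h | h <;> rw [h, sq_abs] <;> nlinarith [sq_nonneg (v.1:ℝ), sq_nonneg (v.2:ℝ)]
  have hNp : (0:ℝ) < (eqv v).norm := lt_of_lt_of_le (by positivity) hN
  rw [Function.comp_apply, gg, norm_mul, ← Complex.ofReal_intCast, norm_cpow_eq_rpow_re_of_pos hNp]
  calc _ ≤ 1 * ((eqv v).norm : ℝ) ^ (-s).re := by gcongr; exact chi_le _
    _ ≤ (‖v‖ ^ 2) ^ (-s).re := by
        rw [one_mul]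
        exact Real.rpow_le_rpow_of_nonpos (by positivity) hN (by simp; linarith)
    _ = ‖v‖ ^ (-(2 * s.re)) := by
        rw [← Real.rpow_natCast, ← Real.rpow_mul hpos.le]; congr 1; simp

lemma fiber_sum (s : ℂ) (n : ℕ) : HasSum (fun x : {α : GaussianInt // α.norm.natAbs = n} => gg s x.1) (4 * LSeries.term cc s n) := by
  have hset : ∀ α : GaussianInt, α.norm.natAbs = n ↔ α ∈ fib n := by
    intro α
    rw [mem_fib]
    have := GaussianInt.norm_nonneg α
    omega
  have h1 : HasSum (fun x : (fib n : Set GaussianInt) => gg s x.1) (∑ α ∈ fib n, gg s α) := by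
    have := (fib n).hasSum (gg s)
    exact this
  have h2 : ∑ α ∈ fib n, gg s α = 4 * LSeries.term cc s n := by
    have : ∀ α ∈ fib n, gg s α = chi α * (n:ℂ) ^ (-s) := by
      intro α hα
      rw [mem_fib] at hα
      rw [gg, hα]; simp
    rw [Finset.sum_congr rfl this, ← Finset.sum_mul]
    rcases eq_or_ne n 0 with rfl | hn
    · have : ∑ α ∈ fib 0, chi α = 0 := by
        refine Finset.sum_eq_zero fun α hα => ?_
        rw [mem_fib] at hα
        have : α = 0 := GaussianInt.norm_eq_zero.1 (by simpa using hα)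
        rw [this, chi_zero]
      rw [this]; simp
    · rw [LSeries.term_of_ne_zero hn, cc, w, cpow_neg]; ring
  rw [h2] at h1
  let e : {α : GaussianInt // α.norm.natAbs = n} ≃ (fib n : Set GaussianInt) := Equiv.subtypeEquivRight hset
  exact (e.hasSum_iff (f := fun x : (fib n : Set GaussianInt) => gg s x.1)).2 h1

lemma hasSum_L (s : ℂ) (hs : 1 < s.re) : HasSum (fun n => 4 * LSeries.term cc s n) (∑' α, gg s α) := by
  have h := (gg_summable s hs).hasSum
  rw [← (Equiv.sigmaFiberEquiv (fun α : GaussianInt => α.norm.natAbs)).hasSum_iff] at h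
  exact h.sigma (fun n => fiber_sum s n)

lemma cc_summable (s : ℂ) (hs : 1 < s.re) : LSeriesSummable cc s := by
  have := (hasSum_L s hs).summable
  exact (summable_mul_left_iff (by norm_num : (4:ℂ) ≠ 0)).1 this

lemma tsum_gg (s : ℂ) (hs : 1 < s.re) : ∑' α, gg s α = 4 * LSeries cc s := by
  rw [← (hasSum_L s hs).tsum_eq, tsum_mul_left]; rfl

def i1 (v : ℤ × ℤ) : GaussianInt := ⟨2 * v.1 + 1, 2 * v.2⟩
def i2 (v : ℤ × ℤ) : GaussianInt := ⟨2 * v.1 + 2, 2 * v.2 + 1⟩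

lemma i1_inj : Function.Injective i1 := by
  rintro ⟨a, b⟩ ⟨c, d⟩ h
  simp only [i1, Zsqrtd.ext_iff] at h
  ext <;> simp only <;> omega

lemma i2_inj : Function.Injective i2 := by
  rintro ⟨a, b⟩ ⟨c, d⟩ h
  simp only [i2, Zsqrtd.ext_iff] at h
  ext <;> simp only <;> omega

lemma gg_H (s : ℂ) (α : GaussianInt) (hα : α ≠ 0) : gg s α = eps α * H s α.re α.im := by
  have h0 : (α.norm : ℂ) ≠ 0 := by
    have : α.norm ≠ 0 := fun h => hα (GaussianInt.norm_eq_zero.1 h)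
    exact_mod_cast this
  rw [gg, chi, H, GaussianInt.toComplex_def]
  have : (((α.re:ℝ) ^ 2 + (α.im:ℝ) ^ 2 : ℝ) : ℂ) = (α.norm : ℂ) := by rw [norm_eq]; push_cast; ring
  rw [this, sub_eq_add_neg, cpow_add _ _ h0, cpow_neg_one]
  push_cast
  ring

lemma gg_i1 (s : ℂ) (v : ℤ × ℤ) : gg s (i1 v) = H s (2 * v.1 + 1) (2 * v.2) := by
  rw [gg_H]
  · have : eps (i1 v) = 1 := by
      have h1 : (2 * v.1 + 1) % 2 = 1 := by omega
      simp [eps, i1, h1]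
    rw [this]; simp [i1]
  · intro h
    have := congrArg Zsqrtd.re h
    simp [i1] at this
    omega

lemma gg_i2 (s : ℂ) (v : ℤ × ℤ) : gg s (i2 v) = - H s (2 * v.1 + 2) (2 * v.2 + 1) := by
  rw [gg_H]
  · have : eps (i2 v) = -1 := by
      have h1 : (2 * v.1 + 2) % 2 = 0 := by omega
      have h2 : (2 * v.2 + 1) % 2 = 1 := by omega
      simp [eps, i2, h1, h2]
    rw [this]; simp [i2]
  · intro h
    have := congrArg Zsqrtd.im h
    simp [i2] at this
    omega

theorem W_eq (s : ℂ) (hs : 1 < s.re) : W s = 4 * LSeries cc s := by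
  rw [← tsum_gg s hs]
  have hS := gg_summable s hs
  have h1 : HasSum (fun v => gg s (i1 v)) (∑' v, gg s (i1 v)) := (hS.comp_injective i1_inj).hasSum
  have h2 : HasSum (fun v => gg s (i2 v)) (∑' v, gg s (i2 v)) := (hS.comp_injective i2_inj).hasSum
  have h3 : ∑' v, T v s = ∑' v, gg s (i1 v) + ∑' v, gg s (i2 v) := by
    rw [← (h1.add h2).tsum_eq]
    refine tsum_congr fun v => ?_
    rw [gg_i1, gg_i2, T]; ring
  rw [W, h3]
  have g1 : ∑' v, gg s (i1 v) = ∑' α, (Set.range i1).indicator (gg s) α := by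
    rw [← i1_inj.tsum_eq (f := (Set.range i1).indicator (gg s)) Set.support_indicator_subset]
    exact tsum_congr fun v => by rw [Set.indicator_of_mem (Set.mem_range_self v)]
  have g2 : ∑' v, gg s (i2 v) = ∑' α, (Set.range i2).indicator (gg s) α := by
    rw [← i2_inj.tsum_eq (f := (Set.range i2).indicator (gg s)) Set.support_indicator_subset]
    exact tsum_congr fun v => by rw [Set.indicator_of_mem (Set.mem_range_self v)]
  rw [g1, g2, ← (hS.indicator _).tsum_add (hS.indicator _)]
  refine tsum_congr fun α => ?_
  have m1 : α ∈ Set.range i1 ↔ (α.re % 2 = 1 ∧ α.im % 2 = 0) := by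
    constructor
    · rintro ⟨v, rfl⟩; simp only [i1]; omega
    · intro h
      refine ⟨(α.re / 2, α.im / 2), ?_⟩
      ext <;> simp only [i1] <;> omega
  have m2 : α ∈ Set.range i2 ↔ (α.re % 2 = 0 ∧ α.im % 2 = 1) := by
    constructor
    · rintro ⟨v, rfl⟩; simp only [i2]; omega
    · intro h
      refine ⟨(α.re / 2 - 1, α.im / 2), ?_⟩
      ext <;> simp only [i2] <;> omega
  classical
  rw [Set.indicator_apply, Set.indicator_apply]
  simp only [m1, m2]
  split_ifs with a b b
  · omega
  · simp
  · simp
  · have : eps α = 0 := by rw [eps, if_neg a, if_neg b]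
    simp [gg, chi, this]

end CM
end

section
open Complex Filter
namespace CM

lemma H_one (x y : ℝ) (h : x ^ 2 + y ^ 2 ≠ 0) : H 1 x y = 1 / ((x : ℂ) - y * I) ^ 2 := by
  have e : ((x ^ 2 + y ^ 2 : ℝ) : ℂ) = (x + y * I) * (x - y * I) := by
    push_cast
    linear_combination ((y:ℂ) ^ 2) * I_sq
  have h0 : ((x ^ 2 + y ^ 2 : ℝ) : ℂ) ≠ 0 := by exact_mod_cast h
  rw [H]
  have e2 : (-1 - 1 : ℂ) = -((2:ℕ) : ℂ) := by norm_num
  rw [e2, cpow_neg, cpow_natCast, e]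
  rw [e] at h0
  have h1 := left_ne_zero_of_mul h0
  have h2 := right_ne_zero_of_mul h0
  field_simp

lemma zsum (z : ℂ) : Summable (fun n : ℤ => 1 / (z + n) ^ 2) := by
  have := EisensteinSeries.linear_right_summable z 1 (k := 2) le_rfl
  refine this.congr fun n => ?_
  simp

lemma zsum_eq (z : ℂ) (hz : 0 < z.im) (r : ℝ) (hr : Complex.exp (2 * Real.pi * I * z) = r) (hr1 : |r| < 1) :
    ∑' n : ℤ, 1 / (z + n) ^ 2 = ((-(4 * Real.pi ^ 2) * (r / (1 - r) ^ 2) : ℝ) : ℂ) := by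
  have h := EisensteinSeries.qExpansion_identity (k := 1) le_rfl ⟨z, hz⟩
  have h' : ∑' n : ℕ, ((n : ℂ) ^ 1 * Complex.exp (2 * Real.pi * I * z) ^ n) = r / (1 - r) ^ 2 := by
    rw [hr]
    simp only [pow_one]
    exact tsum_coe_mul_geometric_of_norm_lt_one (by simpa using hr1)
  have h2 : ∑' n : ℤ, 1 / (z + n) ^ 2 = ((-2 * Real.pi * I) ^ 2 / (Nat.factorial 1)) * ∑' n : ℕ, ((n : ℂ) ^ 1 * Complex.exp (2 * Real.pi * I * z) ^ n) := h
  rw [h2, h']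
  push_cast
  simp
  ring_nf
  rw [I_sq]; ring

lemma zsum_conj (z : ℂ) : (∑' n : ℤ, 1 / (z + n) ^ 2).re = (∑' n : ℤ, 1 / ((starRingEnd ℂ) z + n) ^ 2).re := by
  have : ∑' n : ℤ, 1 / ((starRingEnd ℂ) z + n) ^ 2 = (starRingEnd ℂ) (∑' n : ℤ, 1 / (z + n) ^ 2) := by
    rw [Complex.conj_tsum]
    refine tsum_congr fun n => ?_
    simp
  rw [this, conj_re]

lemma half_pos_aux (y : ℝ) (hy : 0 < y) : 0 < (∑' n : ℤ, 1 / (((1/2 : ℝ) + y * I : ℂ) + n) ^ 2).re := by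
  rw [zsum_eq _ (by simpa using hy) (-Real.exp (-(2 * Real.pi * y))), ofReal_re]
  · have : 0 < Real.exp (-(2 * Real.pi * y)) := Real.exp_pos _
    have h2 : 0 < Real.pi := Real.pi_pos
    have h3 : 0 < 1 - -Real.exp (-(2 * Real.pi * y)) := by linarith
    rw [neg_mul, neg_div, mul_neg, neg_neg]; positivity
  · have : (2 * Real.pi * I * ((1/2 : ℝ) + y * I) : ℂ) = Real.pi * I + ((-(2 * Real.pi * y) : ℝ) : ℂ) := by
      push_cast; linear_combination (2 * Real.pi * y : ℂ) * I_sq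
    rw [this, Complex.exp_add, Complex.exp_pi_mul_I]; push_cast; ring
  · rw [abs_neg, abs_of_pos (Real.exp_pos _), Real.exp_lt_one_iff]
    have h2 : 0 < Real.pi := Real.pi_pos
    simp; positivity

lemma int_neg_aux (y : ℝ) (hy : 0 < y) : (∑' n : ℤ, 1 / ((y * I : ℂ) + n) ^ 2).re < 0 := by
  have hlt : Real.exp (-(2 * Real.pi * y)) < 1 := by
    rw [Real.exp_lt_one_iff]
    have h2 : 0 < Real.pi := Real.pi_pos
    simp; positivity
  rw [zsum_eq _ (by simpa using hy) (Real.exp (-(2 * Real.pi * y))), ofReal_re]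
  · have : 0 < Real.exp (-(2 * Real.pi * y)) := Real.exp_pos _
    have h2 : 0 < Real.pi := Real.pi_pos
    have h3 : 0 < 1 - Real.exp (-(2 * Real.pi * y)) := by linarith
    rw [neg_mul, neg_lt_zero]; positivity
  · have : (2 * Real.pi * I * (y * I) : ℂ) = ((-(2 * Real.pi * y) : ℝ) : ℂ) := by
      push_cast; linear_combination (2 * Real.pi * y : ℂ) * I_sq
    rw [this]; push_cast; ring
  · rwa [abs_of_pos (Real.exp_pos _)]

lemma half_pos' (y : ℝ) : 0 < (∑' n : ℤ, 1 / (((1/2 : ℝ) - y * I : ℂ) + n) ^ 2).re := by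
  rcases lt_trichotomy y 0 with h | rfl | h
  · have := half_pos_aux (-y) (by linarith)
    simpa [sub_eq_add_neg] using this
  · have hs := zsum (((1/2 : ℝ) - (0:ℝ) * I : ℂ))
    rw [Complex.re_tsum hs]
    have e : ∀ n : ℤ, (1 / ((((1/2 : ℝ) - (0:ℝ) * I : ℂ)) + n) ^ 2).re = 1 / (1 / 2 + (n:ℝ)) ^ 2 := by
      intro n
      rw [← ofReal_re (1 / (1 / 2 + (n:ℝ)) ^ 2)]
      congr 1; push_cast; simp
    have hs' := (Complex.hasSum_re hs.hasSum).summable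
    refine hs'.tsum_pos (fun n => ?_) 0 ?_
    · rw [e]; positivity
    · rw [e]; norm_num
  · have e : (starRingEnd ℂ) ((1/2 : ℝ) - y * I : ℂ) = (1/2:ℝ) + y * I := by
      rw [map_sub, map_mul, conj_ofReal, conj_ofReal, conj_I]; ring
    rw [zsum_conj, e]; exact half_pos_aux y h

lemma int_neg' (y : ℝ) (hy : y ≠ 0) : (∑' n : ℤ, 1 / ((-(y * I) : ℂ) + n) ^ 2).re < 0 := by
  rcases lt_or_gt_of_ne hy with h | h
  · have := int_neg_aux (-y) (by linarith)
    simpa using this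
  · rw [zsum_conj]
    have := int_neg_aux y h
    simpa using this

lemma T_row (a b : ℤ) : T (a, b) 1 = (1 / 4) * (1 / (((1/2 : ℝ) - (b:ℝ) * I : ℂ) + a) ^ 2)
    - (1 / 4) * (1 / (-((b + 1/2 : ℝ) * I : ℂ) + (a + 1 : ℤ)) ^ 2) := by
  have hp : 0 < (1 + ‖((a, b) : ℤ × ℤ)‖) ^ 2 / 18 := by positivity
  have h1 := hp.trans_le (N_lower a b 0 le_rfl zero_le_one)
  have h2 := hp.trans_le (N_lower a b 1 zero_le_one le_rfl)
  have e : 2 * (a:ℝ) + 1 + 1 = 2 * a + 2 := by ring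
  rw [add_zero, add_zero] at h1
  rw [e] at h2
  rw [T, H_one _ _ h1.ne', H_one _ _ h2.ne']
  have e1 : ((2 * (a:ℝ) + 1 : ℝ) : ℂ) - ((2 * (b:ℝ) : ℝ) : ℂ) * I = 2 * (((1/2 : ℝ) - (b:ℝ) * I : ℂ) + a) := by
    push_cast; ring
  have e2 : ((2 * (a:ℝ) + 2 : ℝ) : ℂ) - ((2 * (b:ℝ) + 1 : ℝ) : ℂ) * I = 2 * (-((b + 1/2 : ℝ) * I : ℂ) + (a + 1 : ℤ)) := by
    push_cast; ring
  rw [e1, e2, mul_pow, mul_pow]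
  congr 1 <;> rw [one_div_mul_one_div] <;> norm_num

lemma row_pos (b : ℤ) : 0 < (∑' a : ℤ, T (a, b) 1).re := by
  have s1 := zsum ((1/2 : ℝ) - (b:ℝ) * I : ℂ)
  have s2 := zsum (-((b + 1/2 : ℝ) * I : ℂ))
  have s3 : Summable fun a : ℤ => 1 / (-((b + 1/2 : ℝ) * I : ℂ) + (a + 1 : ℤ)) ^ 2 :=
    ((Equiv.addRight (1:ℤ)).summable_iff (f := fun n : ℤ => 1 / (-((b + 1/2 : ℝ) * I : ℂ) + n) ^ 2)).2 s2
  have e3 : ∑' a : ℤ, 1 / (-((b + 1/2 : ℝ) * I : ℂ) + (a + 1 : ℤ)) ^ 2 = ∑' a : ℤ, 1 / (-((b + 1/2 : ℝ) * I : ℂ) + a) ^ 2 :=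
    (Equiv.addRight (1:ℤ)).tsum_eq (fun n : ℤ => 1 / (-((b + 1/2 : ℝ) * I : ℂ) + n) ^ 2)
  simp_rw [T_row]
  rw [(s1.mul_left _).tsum_sub (s3.mul_left _), tsum_mul_left, tsum_mul_left, e3, sub_re]
  have p1 := half_pos' b
  have hne : (b:ℝ) + 1 / 2 ≠ 0 := by
    intro h
    have : ((2 * b + 1 : ℤ) : ℝ) = 0 := by push_cast; linarith
    have : 2 * b + 1 = 0 := by exact_mod_cast this
    omega
  have p2 := int_neg' (b + 1/2) hne
  have q : ∀ z : ℂ, ((1 / 4 : ℂ) * z).re = (1 / 4) * z.re := by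
    intro z
    have : (1 / 4 : ℂ) = ((1 / 4 : ℝ) : ℂ) := by push_cast; rfl
    rw [this, Complex.re_ofReal_mul]
  rw [q, q]
  linarith

theorem W_one : W 1 ≠ 0 := by
  have hS := T_summable 1 (by norm_num)
  have hS' : Summable (fun v : ℤ × ℤ => T v.swap 1) := (Equiv.prodComm ℤ ℤ).summable_iff.2 hS
  have e : W 1 = ∑' b : ℤ, ∑' a : ℤ, T (a, b) 1 := by
    rw [W, ← (Equiv.prodComm ℤ ℤ).tsum_eq]
    exact hS'.tsum_prod
  have hs2 : Summable (fun b : ℤ => ∑' a : ℤ, T (a, b) 1) := hS'.prod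
  intro h
  have h2 : 0 < (W 1).re := by
    rw [e, Complex.re_tsum hs2]
    exact (Complex.hasSum_re hs2.hasSum).summable.tsum_pos (fun b => (row_pos b).le) 0 (row_pos 0)
  rw [h] at h2
  simp at h2

end CM
end

section
open Complex Filter Topology
open ArithmeticFunction.vonMangoldt
namespace CM

noncomputable abbrev RR (n : ℕ) : ℝ := residueClass (1 : ZMod 4) n
noncomputable def LR (s : ℂ) : ℂ := LSeries (fun n => (RR n : ℂ)) s
noncomputable def LM (s : ℂ) : ℂ := LSeries (fun n => (Lam n : ℂ)) s

lemma R_summable (s : ℂ) (hs : 1 < s.re) : LSeriesSummable (fun n => (RR n : ℂ)) s :=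
  LSeriesSummable_of_abscissaOfAbsConv_lt_re
    ((abscissaOfAbsConv_residueClass_le_one (1 : ZMod 4)).trans_lt (by exact_mod_cast hs))

lemma M_summable (s : ℂ) (hs : 1 < s.re) : LSeriesSummable (fun n => (Lam n : ℂ)) s := by
  refine Summable.of_norm_bounded ((R_summable s hs).norm.mul_left 2) fun n => ?_
  rcases eq_or_ne n 0 with rfl | hn
  · simp
  · rw [LSeries.term_of_ne_zero hn, LSeries.term_of_ne_zero hn, norm_div, norm_div, ← mul_div_assoc]
    gcongr
    rw [norm_real, norm_real, Real.norm_eq_abs, Real.norm_of_nonneg (residueClass_nonneg _ _)]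
    exact Lam_bound n

lemma M_abs : LSeries.abscissaOfAbsConv (fun n => (Lam n : ℂ)) ≤ (1:ℝ) :=
  LSeries.abscissaOfAbsConv_le_of_forall_lt_LSeriesSummable fun y hy => M_summable y (by simpa using hy)

lemma cc_abs : LSeries.abscissaOfAbsConv cc ≤ (1:ℝ) :=
  LSeries.abscissaOfAbsConv_le_of_forall_lt_LSeriesSummable fun y hy => cc_summable y (by simpa using hy)

lemma M_cont (s : ℂ) (hs : 1 < s.re) : ContinuousAt LM s :=
  (LSeries_hasDerivAt (M_abs.trans_lt (by exact_mod_cast hs))).continuousAt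

lemma W_deriv (s : ℂ) (hs : 1 < s.re) : HasDerivAt W (-(W s * LM s)) s := by
  have h1 := LSeries_hasDerivAt (cc_abs.trans_lt (show ((1:ℝ) : EReal) < s.re by exact_mod_cast hs))
  have h2 : LSeries (LSeries.logMul cc) s = LM s * LSeries cc s := by
    rw [LM, ← LSeries_convolution' (M_summable s hs) (cc_summable s hs)]
    refine LSeries_congr (fun {n} hn => ?_) s
    rw [LSeries.convolution_def, LSeries.logMul]
    simp only
    rw [Nat.sum_divisorsAntidiagonal (fun a b => (Lam a : ℂ) * cc b), cc_conv n hn, natCast_log]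
  have h3 := h1.const_mul 4
  rw [h2] at h3
  have h4 : HasDerivAt W (4 * -(LM s * LSeries cc s)) s := by
    refine h3.congr_of_eventuallyEq ?_
    have : {z : ℂ | 1 < z.re} ∈ 𝓝 s := (isOpen_lt continuous_const continuous_re).mem_nhds hs
    filter_upwards [this] with z hz using W_eq z hz
  convert h4 using 1
  rw [W_eq s hs]; ring

lemma W_an : AnalyticOnNhd ℂ W {s | 1/2 < s.re} :=
  W_diff.analyticOnNhd (isOpen_lt continuous_const continuous_re)

lemma W_order (s : ℂ) (hs : 1 ≤ s.re) : ∃ m : ℕ, (m = 0 → W s ≠ 0) ∧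
    Tendsto (fun x : ℝ => (x : ℂ) * LM (s + x)) (𝓝[>] 0) (𝓝 (-(m:ℂ))) := by
  have hs' : s ∈ {s : ℂ | 1/2 < s.re} := by simp only [Set.mem_ofPred_eq]; linarith
  have hnz : ¬ ∀ᶠ z in 𝓝 s, W z = 0 := by
    intro h
    have hpre : IsPreconnected {s : ℂ | 1/2 < s.re} := (convex_halfSpace_re_gt (1/2)).isPreconnected
    have := W_an.eqOn_zero_of_preconnected_of_eventuallyEq_zero hpre hs' h
    exact W_one (this (show (1:ℂ) ∈ {s : ℂ | 1/2 < s.re} by norm_num))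
  obtain ⟨m, g, hg, hg0, hW⟩ := (W_an s hs').exists_eventuallyEq_pow_smul_nonzero_iff.2 hnz
  refine ⟨m, ?_, ?_⟩
  · rintro rfl
    have := hW.self_of_nhds
    simpa [this] using hg0
  have hpath : Tendsto (fun x : ℝ => s + (x:ℂ)) (𝓝[>] 0) (𝓝 s) := by
    have : ContinuousAt (fun x : ℝ => s + (x:ℂ)) 0 := by fun_prop
    have := this.tendsto
    simp only [ofReal_zero, add_zero] at this
    exact this.mono_left nhdsWithin_le_nhds
  have hlim : Tendsto (fun x : ℝ => -((m:ℂ) + x * (deriv g (s + x) / g (s + x)))) (𝓝[>] 0) (𝓝 (-((m:ℂ) + 0 * (deriv g s / g s)))) := by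
    refine (tendsto_const_nhds.add (Tendsto.mul ?_ (Tendsto.div ?_ ?_ hg0))).neg
    · have : ContinuousAt (fun x : ℝ => (x:ℂ)) 0 := by fun_prop
      have := this.tendsto
      simp only [ofReal_zero] at this
      exact this.mono_left nhdsWithin_le_nhds
    · exact hg.deriv.continuousAt.tendsto.comp hpath
    · exact hg.continuousAt.tendsto.comp hpath
  rw [zero_mul, add_zero] at hlim
  refine hlim.congr' ?_
  have e1 := hpath.eventually hW.eventually_nhds
  have e2 := hpath.eventually hg.eventually_analyticAt
  have e3 := hpath.eventually (hg.continuousAt.eventually_ne hg0)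
  filter_upwards [e1, e2, e3, self_mem_nhdsWithin] with x h1 h2 h3 hx
  have hx : 0 < x := hx
  have hre : 1 < (s + x).re := by simp; linarith
  have d1 := W_deriv _ hre
  have hx0 : (x:ℂ) ≠ 0 := by exact_mod_cast hx.ne'
  have d2 : HasDerivAt W _ (s + x) := (((((hasDerivAt_id (s + x)).sub_const s).pow m).mul h2.differentiableAt.hasDerivAt).congr_of_eventuallyEq h1)
  have d3 := d1.unique d2
  have d4 := h1.self_of_nhds
  simp only [smul_eq_mul, id, Pi.pow_apply, add_sub_cancel_left, mul_one] at d3 d4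
  rw [d4] at d3
  have hm : (x:ℂ) * ((m:ℂ) * (x:ℂ) ^ (m - 1)) = m * (x:ℂ)^m := by
    rcases m with _ | m
    · simp
    · rw [Nat.add_sub_cancel, pow_succ]; ring
  have : ((x:ℂ) ^ m * g (s + x)) * (x * LM (s + x)) = ((x:ℂ) ^ m * g (s + x)) * (-((m:ℂ) + x * (deriv g (s + x) / g (s + x)))) := by
    have hd : deriv g (s + x) / g (s + x) * g (s + x) = deriv g (s + x) := div_mul_cancel₀ _ h3
    linear_combination (-(x:ℂ)) * d3 - g (s+x) * hm + (x:ℂ)^m * x * hd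
  exact (mul_left_cancel₀ (mul_ne_zero (pow_ne_zero _ hx0) h3) this).symm

lemma term_pos (x t : ℝ) (n : ℕ) :
    0 ≤ 6 * (LSeries.term (fun n => (RR n : ℂ)) (1 + x : ℂ) n).re
      + 4 * (LSeries.term (fun n => (Lam n : ℂ)) (1 + t * I + x : ℂ) n).re
      + 2 * (LSeries.term (fun n => (RR n : ℂ)) (1 + (2 * t) * I + x : ℂ) n).re := by
  rcases eq_or_ne n 0 with rfl | hn
  · simp
  have hn' : (n:ℂ) ≠ 0 := by exact_mod_cast hn
  have hnp : (0:ℝ) < n := by positivity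
  set z : ℂ := (n:ℂ) ^ (-(t * I : ℂ)) with hz
  set r : ℝ := ((n:ℝ) ^ (1 + x))⁻¹ with hr
  have hr0 : 0 ≤ r := by positivity
  have hrc : ((n:ℂ) ^ (1 + x : ℂ))⁻¹ = (r : ℂ) := by
    rw [hr, ofReal_inv, ofReal_cpow hnp.le]; push_cast; rfl
  have hzn : ‖z‖ = 1 := by
    rw [hz, norm_natCast_cpow_of_pos (by omega)]; simp
  have hz2 : z.re ^ 2 + z.im ^ 2 = 1 := by
    have := Complex.sq_norm z
    rw [hzn, normSq_apply] at this; linarith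
  rw [LSeries.term_of_ne_zero hn, LSeries.term_of_ne_zero hn, LSeries.term_of_ne_zero hn]
  have a1 : (n:ℂ) ^ (1 + t * I + x : ℂ) = (n:ℂ) ^ (1 + x : ℂ) * z⁻¹ := by
    rw [hz, cpow_neg, inv_inv, ← cpow_add _ _ hn']; congr 1; ring
  have a2 : (n:ℂ) ^ (1 + (2 * t) * I + x : ℂ) = (n:ℂ) ^ (1 + x : ℂ) * (z ^ 2)⁻¹ := by
    rw [hz, cpow_neg, inv_pow, inv_inv, sq, ← cpow_add _ _ hn', ← cpow_add _ _ hn']; congr 1; ring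
  rw [a1, a2, div_eq_mul_inv, div_eq_mul_inv, div_eq_mul_inv, mul_inv, mul_inv, inv_inv, inv_inv, hrc]
  have b1 : ((RR n : ℂ) * r).re = RR n * r := by rw [← ofReal_mul, ofReal_re]
  have b2 : ((Lam n : ℂ) * (r * z)).re = Lam n * r * z.re := by
    rw [← mul_assoc, ← ofReal_mul, re_ofReal_mul]
  have b3 : ((RR n : ℂ) * (r * z ^ 2)).re = RR n * r * (2 * z.re ^ 2 - 1) := by
    rw [← mul_assoc, ← ofReal_mul, re_ofReal_mul, sq z, mul_re]; congr 1; linarith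
  rw [b1, b2, b3]
  have hR : 0 ≤ RR n := residueClass_nonneg _ _
  have hL := abs_le.1 (Lam_bound n)
  have key : 0 ≤ 4 * RR n + 4 * RR n * z.re ^ 2 + 4 * Lam n * z.re := by
    rcases le_total 0 z.re with h | h
    · nlinarith [mul_nonneg hR (sq_nonneg (1 - z.re)), mul_nonneg h (sub_nonneg.2 hL.1)]
    · nlinarith [mul_nonneg hR (sq_nonneg (1 + z.re)), mul_nonneg (neg_nonneg.2 h) (sub_nonneg.2 hL.2)]
  nlinarith [mul_nonneg hr0 key]

lemma re_pos (x t : ℝ) (hx : 0 < x) :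
    0 ≤ 6 * (LR (1 + x)).re + 4 * (LM (1 + t * I + x)).re + 2 * (LR (1 + (2 * t) * I + x)).re := by
  have s1 := (R_summable (1 + x) (by simpa using hx)).hasSum
  have s2 := (M_summable (1 + t * I + x) (by simpa using hx)).hasSum
  have s3 := (R_summable (1 + (2 * t) * I + x) (by simpa using hx)).hasSum
  have := (((Complex.hasSum_re s1).mul_left 6).add ((Complex.hasSum_re s2).mul_left 4)).add ((Complex.hasSum_re s3).mul_left 2)
  exact this.nonneg (term_pos x t)

noncomputable def GR : ℂ → ℂ := LFunctionResidueClassAux (1 : ZMod 4)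

lemma GR_cont : ContinuousOn GR {s | 1 ≤ s.re} := continuousOn_LFunctionResidueClassAux _

lemma LR_eq (s : ℂ) (hs : 1 < s.re) : 2 * LR s = 2 * GR s + 1 / (s - 1) := by
  have := eqOn_LFunctionResidueClassAux (a := (1 : ZMod 4)) isUnit_one hs
  have ht : (Nat.totient 4 : ℂ) = 2 := by
    have : Nat.totient 4 = 2 := by decide
    rw [this]; norm_num
  simp only [ht] at this
  rw [GR, this, LR]; ring

lemma W_ne (s : ℂ) (hs : 1 ≤ s.re) : W s ≠ 0 := by
  by_cases hs1 : s = 1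
  · rw [hs1]; exact W_one
  obtain ⟨m, hm, hlim⟩ := W_order s hs
  apply hm
  have hx0 : Tendsto (fun x : ℝ => (x:ℂ)) (𝓝[>] 0) (𝓝 0) := by
    have : ContinuousAt (fun x : ℝ => (x:ℂ)) 0 := by fun_prop
    have := this.tendsto
    simp only [ofReal_zero] at this
    exact this.mono_left nhdsWithin_le_nhds
  have hpath : ∀ s : ℂ, Tendsto (fun x : ℝ => s + (x:ℂ)) (𝓝[>] 0) (𝓝 s) := by
    intro s
    simpa using hx0.const_add s
  have hGpath : ∀ s : ℂ, s.re = 1 → Tendsto (fun x : ℝ => GR (s + (x:ℂ))) (𝓝[>] 0) (𝓝 (GR s)) := by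
    intro s hs
    refine (GR_cont s hs.ge).tendsto.comp (tendsto_nhdsWithin_iff.2 ⟨hpath s, ?_⟩)
    filter_upwards [self_mem_nhdsWithin] with x hx
    have : 0 < x := hx
    simp [hs, this.le]
  rcases hs.lt_or_eq with h | h
  · have := hx0.mul ((M_cont s h).tendsto.comp (hpath s))
    have := tendsto_nhds_unique hlim this
    simpa using this
  · · set t := s.im with ht
      have hst : s = 1 + t * I := by
        apply Complex.ext <;> simp [h.symm, ht]
      have ht0 : t ≠ 0 := by
        intro h0; apply hs1; rw [hst, h0]; simp
      have L1 : Tendsto (fun x : ℝ => (x:ℂ) * (2 * LR (1 + x))) (𝓝[>] 0) (𝓝 1) := by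
        have := (hx0.mul ((hGpath 1 (by simp)).const_mul 2)).add_const 1
        rw [zero_mul, zero_add] at this
        refine this.congr' ?_
        filter_upwards [self_mem_nhdsWithin] with x hx
        have hx : 0 < x := hx
        have : (x:ℂ) ≠ 0 := by exact_mod_cast hx.ne'
        rw [LR_eq _ (by simpa using hx)]
        rw [add_sub_cancel_left, mul_add, mul_one_div, div_self this]
      have L3 : Tendsto (fun x : ℝ => (x:ℂ) * (2 * LR (1 + (2 * t) * I + x))) (𝓝[>] 0) (𝓝 0) := by
        have c : ContinuousAt (fun z : ℂ => 1 / (z - 1)) (1 + (2 * t) * I) := by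
          refine ContinuousAt.div (by fun_prop) (by fun_prop) ?_
          simp [ht0]
        have := hx0.mul (((hGpath (1 + (2 * t) * I) (by simp)).const_mul 2).add (c.tendsto.comp (hpath _)))
        rw [zero_mul] at this
        refine this.congr' ?_
        filter_upwards [self_mem_nhdsWithin] with x hx
        have hx : 0 < x := hx
        rw [LR_eq _ (by simpa using hx)]
        rfl
      rw [hst] at hlim
      have r1 := (continuous_re.tendsto _).comp L1
      have r2 := (continuous_re.tendsto _).comp hlim
      have r3 := (continuous_re.tendsto _).comp L3
      have r := ((r1.const_mul 3).add (r2.const_mul 4)).add r3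
      have hge := ge_of_tendsto r (b := 0) (by
        filter_upwards [self_mem_nhdsWithin] with x hx
        have hx : 0 < x := hx
        have p := re_pos x t hx
        simp only [Function.comp]
        have q : ∀ z : ℂ, ((2:ℂ) * z).re = 2 * z.re := by intro z; simp
        rw [re_ofReal_mul, re_ofReal_mul, re_ofReal_mul, q, q]
        nlinarith [mul_nonneg hx.le p])
      simp at hge
      by_contra hm0
      have : (1:ℝ) ≤ m := by exact_mod_cast Nat.one_le_iff_ne_zero.2 hm0
      linarith

end CM
end

section
open Filter Topology
namespace CM

lemma wi' (f : ℕ → ℝ) (hf : ∀ n, 0 ≤ f n) (hf4 : ∀ n, f n ≤ 4 * ArithmeticFunction.vonMangoldt n)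
    (G : ℂ → ℂ) (hGc : ContinuousOn G {s | 1 ≤ s.re})
    (hG : ∀ s : ℂ, 1 < s.re → LSeries (fun n => (f n : ℂ)) s = G s + 1 / (s - 1)) :
    Tendsto (fun N : ℕ => (∑ k ∈ Finset.Ioc 0 N, f k) / N) atTop (𝓝 1) := by
  have h := wiener_ikehara f hf (4 * (Real.log 4 + 4)) (fun x hx => ?_) G hGc hG
  · have h2 := h.comp tendsto_natCast_atTop_atTop
    refine h2.congr fun N => ?_
    simp only [Function.comp, Nat.floor_natCast]
    rfl
  · have h1 := Chebyshev.psi_le_const_mul_self (x := x) (by linarith)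
    calc ∑ k ∈ Finset.Icc 1 ⌊x⌋₊, f k ≤ ∑ k ∈ Finset.Icc 1 ⌊x⌋₊, 4 * ArithmeticFunction.vonMangoldt k :=
          Finset.sum_le_sum fun k _ => hf4 k
      _ = 4 * Chebyshev.psi x := by rw [← Finset.mul_sum]; rfl
      _ ≤ _ := by linarith

lemma partial_sum (f b : ℕ → ℝ) (hf : ∀ n, 0 ≤ f n) (hf4 : ∀ n, f n ≤ 4 * ArithmeticFunction.vonMangoldt n)
    (hb : ∀ p, p.Prime → f p = b p * Real.log p)
    (hlim : Tendsto (fun N : ℕ => (∑ k ∈ Finset.Ioc 0 N, f k) / N) atTop (𝓝 1)) :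
    Tendsto (fun N : ℕ => (∑ p ∈ (Finset.range (N + 1)).filter Nat.Prime, b p) * Real.log N / N) atTop (𝓝 1) := by
  have hset : ∀ N, (Finset.range (N + 1)).filter Nat.Prime = (Finset.Ioc 0 N).filter Nat.Prime := by
    intro N; ext p
    simp only [Finset.mem_filter, Finset.mem_range, Finset.mem_Ioc]
    constructor
    · rintro ⟨h1, h2⟩; exact ⟨⟨h2.pos, by omega⟩, h2⟩
    · rintro ⟨h1, h2⟩; exact ⟨by omega, h2⟩
  have hb0 : ∀ p, p.Prime → 0 ≤ b p ∧ b p ≤ 4 := by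
    intro p hp
    have hl : 0 < Real.log p := Real.log_pos (by exact_mod_cast hp.one_lt)
    have h1 := hf p
    have h2 := hf4 p
    rw [ArithmeticFunction.vonMangoldt_apply_prime hp] at h2
    rw [hb p hp] at h1 h2
    exact ⟨nonneg_of_mul_nonneg_left h1 hl, le_of_mul_le_mul_right h2 hl⟩
  -- error from non-primes
  have e1 : Tendsto (fun N : ℕ => (∑ k ∈ (Finset.Ioc 0 N).filter (fun k => ¬ k.Prime), f k) / N) atTop (𝓝 0) := by
    obtain ⟨C, hC⟩ := Chebyshev.psi_sub_theta_le_mul_sqrt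
    have hz : Tendsto (fun N : ℕ => (4 * C) * (√(N:ℝ))⁻¹) atTop (𝓝 0) := by
      have : Tendsto (fun N : ℕ => (√(N:ℝ))⁻¹) atTop (𝓝 0) :=
        (Real.tendsto_sqrt_atTop.comp tendsto_natCast_atTop_atTop).inv_tendsto_atTop
      simpa using this.const_mul (4 * C)
    refine squeeze_zero' (Eventually.of_forall fun N => ?_) ?_ hz
    · exact div_nonneg (Finset.sum_nonneg fun k _ => hf k) (by positivity)
    · filter_upwards [eventually_gt_atTop 0] with N hN
      have hN' : (0:ℝ) < N := by exact_mod_cast hN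
      have h1 : ∑ k ∈ (Finset.Ioc 0 N).filter (fun k => ¬ k.Prime), f k ≤ 4 * (C * √(N:ℝ)) := by
        calc _ ≤ ∑ k ∈ (Finset.Ioc 0 N).filter (fun k => ¬ k.Prime), 4 * ArithmeticFunction.vonMangoldt k :=
              Finset.sum_le_sum fun k _ => hf4 k
          _ = 4 * (Chebyshev.psi N - Chebyshev.theta N) := by
              rw [Chebyshev.psi_sub_theta_eq_sum_not_prime, ← Finset.mul_sum, Nat.floor_natCast]
          _ ≤ _ := by gcongr; exact hC N
      calc _ ≤ 4 * (C * √(N:ℝ)) / N := by gcongr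
        _ = 4 * C * (√(N:ℝ) / N) := by ring
        _ = _ := by rw [Real.sqrt_div_self]; 
  -- error from log N - log p
  have e2 : Tendsto (fun N : ℕ => (∑ p ∈ (Finset.Ioc 0 N).filter Nat.Prime, b p * (Real.log N - Real.log p)) / N) atTop (𝓝 0) := by
    have hO := Chebyshev.primeCounting_sub_theta_div_log_isBigO
    obtain ⟨C, hC⟩ := hO.bound
    have hC := tendsto_natCast_atTop_atTop (R := ℝ) |>.eventually hC
    have hz : Tendsto (fun N : ℕ => (4 * C) * (Real.log (N:ℝ))⁻¹) atTop (𝓝 0) := by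
      have : Tendsto (fun N : ℕ => (Real.log (N:ℝ))⁻¹) atTop (𝓝 0) :=
        (Real.tendsto_log_atTop.comp tendsto_natCast_atTop_atTop).inv_tendsto_atTop
      simpa using this.const_mul (4 * C)
    have hlogle : ∀ N p : ℕ, p ∈ (Finset.Ioc 0 N).filter Nat.Prime → 0 ≤ Real.log N - Real.log p := by
      intro N p hp
      simp only [Finset.mem_filter, Finset.mem_Ioc] at hp
      rw [sub_nonneg]
      exact Real.log_le_log (by exact_mod_cast hp.1.1) (by exact_mod_cast hp.1.2)
    refine squeeze_zero' (Eventually.of_forall fun N => ?_) ?_ hz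
    · refine div_nonneg (Finset.sum_nonneg fun p hp => ?_) (by positivity)
      exact mul_nonneg (hb0 p (Finset.mem_filter.1 hp).2).1 (hlogle N p hp)
    · filter_upwards [eventually_gt_atTop 1, hC] with N hN hCN
      have hN' : (0:ℝ) < N := by positivity
      have hl : 0 < Real.log N := Real.log_pos (by exact_mod_cast hN)
      rw [Nat.floor_natCast] at hCN
      have hpi : (Nat.primeCounting N : ℝ) = (((Finset.Ioc 0 N).filter Nat.Prime).card : ℝ) := by
        rw [← hset, Nat.primeCounting, Nat.primeCounting', Nat.count_eq_card_filter_range]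
      have h1 : ∑ p ∈ (Finset.Ioc 0 N).filter Nat.Prime, b p * (Real.log N - Real.log p)
          ≤ 4 * (Real.log N * (Nat.primeCounting N - Chebyshev.theta N / Real.log N)) := by
        calc _ ≤ ∑ p ∈ (Finset.Ioc 0 N).filter Nat.Prime, 4 * (Real.log N - Real.log p) := by
              refine Finset.sum_le_sum fun p hp => ?_
              exact mul_le_mul_of_nonneg_right (hb0 p (Finset.mem_filter.1 hp).2).2 (hlogle N p hp)
          _ = 4 * (Real.log N * Nat.primeCounting N - Chebyshev.theta N) := by
              rw [← Finset.mul_sum, Finset.sum_sub_distrib, Finset.sum_const, nsmul_eq_mul, hpi,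
                Chebyshev.theta, Nat.floor_natCast]
              ring
          _ = _ := by field_simp
      have h2 := (le_abs_self _).trans hCN
      rw [Real.norm_of_nonneg (by positivity)] at h2
      calc _ ≤ 4 * (Real.log N * (C * (N / Real.log N ^ 2))) / N := by
            gcongr
            exact h1.trans (by gcongr)
        _ = _ := by field_simp
  have := (hlim.sub e1).add e2
  rw [sub_zero, add_zero] at this
  refine this.congr fun N => ?_
  rw [← sub_div, ← add_div, hset]
  congr 1
  rw [← Finset.sum_filter_add_sum_filter_not (Finset.Ioc 0 N) Nat.Prime f, add_sub_cancel_right,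
    ← Finset.sum_add_distrib, Finset.sum_mul]
  refine Finset.sum_congr rfl fun p hp => ?_
  rw [hb p (Finset.mem_filter.1 hp).2]; ring

open ArithmeticFunction.vonMangoldt in
lemma pnt : Tendsto (fun N : ℕ => (((Finset.range (N + 1)).filter Nat.Prime).card : ℝ) * Real.log N / N) atTop (𝓝 1) := by
  have h := partial_sum (fun n => ArithmeticFunction.vonMangoldt n) (fun _ => 1)
    (fun n => ArithmeticFunction.vonMangoldt_nonneg)
    (fun n => by linarith [ArithmeticFunction.vonMangoldt_nonneg (n := n)])
    (fun p hp => by rw [ArithmeticFunction.vonMangoldt_apply_prime hp, one_mul])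
    (wi' _ (fun n => ArithmeticFunction.vonMangoldt_nonneg)
      (fun n => by linarith [ArithmeticFunction.vonMangoldt_nonneg (n := n)])
      (LFunctionResidueClassAux (1 : ZMod 1)) (continuousOn_LFunctionResidueClassAux _) ?_)
  · simpa using h
  · intro s hs
    have h := eqOn_LFunctionResidueClassAux (a := (1 : ZMod 1)) isUnit_one hs
    have e : ∀ n : ℕ, residueClass (1 : ZMod 1) n = ArithmeticFunction.vonMangoldt n := fun n => by
      rw [residueClass, Set.indicator_apply, if_pos]
      exact Subsingleton.elim _ _
    simp only [e, Nat.totient_one, Nat.cast_one, inv_one] at h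
    rw [h]; ring

lemma residue_apply {p : ℕ} (hp : p.Prime) : RR p = if p % 4 = 1 then Real.log p else 0 := by
  have h : ((p : ZMod 4) = 1) ↔ p % 4 = 1 := by
    have := ZMod.natCast_eq_natCast_iff' p 1 4
    simpa using this
  rw [RR, ArithmeticFunction.vonMangoldt.residueClass, Set.indicator_apply]
  simp only [Set.mem_ofPred_eq, h, ArithmeticFunction.vonMangoldt_apply_prime hp]

lemma second : Tendsto (fun N : ℕ => (∑ p ∈ (Finset.range (N + 1)).filter Nat.Prime,
    (if p = 2 then 0 else (ap p) ^ 2 / p)) * Real.log N / N) atTop (𝓝 1) := by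
  have hn : ∀ n, 0 ≤ 2 * RR n + Lam n := fun n => by linarith [(abs_le.1 (Lam_bound n)).1]
  have h4 : ∀ n, 2 * RR n + Lam n ≤ 4 * ArithmeticFunction.vonMangoldt n := fun n => by
    have := ArithmeticFunction.vonMangoldt.residueClass_le (1 : ZMod 4) n
    linarith [(abs_le.1 (Lam_bound n)).2]
  refine partial_sum (fun n => 2 * RR n + Lam n) _ hn h4 ?_
    (wi' _ hn h4 (fun s => 2 * GR s - deriv W s / W s) ?_ ?_)
  · intro p hp
    rw [residue_apply hp, Lam_prime hp, tp]
    by_cases h1 : p % 4 = 1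
    · have : p ≠ 2 := by rintro rfl; omega
      rw [if_pos h1, if_pos h1, if_neg this]; ring
    · rw [if_neg h1, if_neg h1]
      by_cases h2 : p = 2
      · rw [if_pos h2]; ring
      · have := hp.eq_two_or_odd
        rw [if_neg h2, ap_three hp (by omega)]; simp
  · refine (GR_cont.const_smul (2:ℂ)).sub (ContinuousOn.div ?_ ?_ fun s hs => W_ne s hs)
    · intro s hs
      exact (W_an s (show 1/2 < s.re by have : 1 ≤ s.re := hs; linarith)).deriv.continuousAt.continuousWithinAt
    · intro s hs
      exact (W_an s (show 1/2 < s.re by have : 1 ≤ s.re := hs; linarith)).continuousAt.continuousWithinAt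
  · intro s hs
    have e : LSeries (fun n => ((2 * RR n + Lam n : ℝ) : ℂ)) s = 2 * LR s + LM s := by
      have := LSeries_add ((R_summable s hs).smul 2) (M_summable s hs)
      rw [LSeries_smul] at this
      rw [LR, LM, ← this]
      refine LSeries_congr (fun {n} _ => ?_) s
      simp
    rw [e, LR_eq s hs, (W_deriv s hs).deriv]
    have := W_ne s hs.le
    field_simp
    ring

theorem final : Tendsto
      (fun N : ℕ =>
        (1 / ((Finset.range (N + 1) |>.filter Nat.Prime).card : ℝ)) *
          ∑ p ∈ Finset.range (N + 1) |>.filter (fun p => p.Prime ∧ p ≠ 2),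
            ((p : ℝ) - (Nat.card {xy : ZMod p × ZMod p //
              xy.2 ^ 2 = xy.1 ^ 3 + xy.1} : ℝ)) ^ 2 / p)
      atTop (nhds 1) := by
  have h := second.div pnt one_ne_zero
  rw [div_one] at h
  refine h.congr' ?_
  filter_upwards [eventually_gt_atTop 1] with N hN
  have hl : 0 < Real.log N := Real.log_pos (by exact_mod_cast hN)
  have hN0 : (0:ℝ) < N := by positivity
  have hs : ∑ p ∈ (Finset.range (N + 1)).filter Nat.Prime, (if p = 2 then 0 else (ap p) ^ 2 / p)
      = ∑ p ∈ (Finset.range (N + 1)).filter (fun p => p.Prime ∧ p ≠ 2), (ap p) ^ 2 / p := by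
    rw [← Finset.filter_filter, Finset.sum_filter (fun p => p ≠ 2)]
    refine Finset.sum_congr rfl fun p _ => ?_
    by_cases h : p = 2 <;> simp [h]
  simp only [Pi.div_apply]
  rw [hs, div_div_div_cancel_right₀ hN0.ne', mul_div_mul_right _ _ hl.ne', one_div, mul_comm, ← div_eq_mul_inv]
  rfl

end CM
end

open Filter

/-- Let `a_p = p − #{(x,y) ∈ F_p² : y² = x³ + x}` be the trace of
Frobenius of the CM elliptic curve `y² = x³ + x`, and let `π(N)` be the number of
primes at most `N`.  Then
`lim_{N → ∞} (1/π(N)) Σ_{odd primes p ≤ N} a_p²/p = 1`. -/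
theorem second_moment_of_CM_traces :
    Tendsto
      (fun N : ℕ =>
        (1 / ((Finset.range (N + 1) |>.filter Nat.Prime).card : ℝ)) *
          ∑ p ∈ Finset.range (N + 1) |>.filter (fun p => p.Prime ∧ p ≠ 2),
            ((p : ℝ) - (Nat.card {xy : ZMod p × ZMod p //
              xy.2 ^ 2 = xy.1 ^ 3 + xy.1} : ℝ)) ^ 2 / p)
      atTop (nhds 1) :=
  CM.final
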